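/- Let ρ_ABC be a positive definite density matrix on the tensor product of finite-dimensional complex Hilbert spaces H_A ⊗ H_B ⊗ H_C. If ρ_ABC is a short quantum Markov chain A−C−B, then I_α(A;B|C)_ρ = 0 and Ĩ_α(A;B|C)_ρ = 0 for all α ∈ (0,1) ∪ (1,∞). Conversely, if I_α(A;B|C)_ρ = 0 for some α ∈ (0,1) ∪ (1,2), or if Ĩ_α(A;B|C)_ρ = 0 for some α ∈ (1/2,1) ∪ (1,∞), then ρ_ABC is a short quantum Markov chain A−C−B. -/

import Mathlib

open scoped ComplexOrder Matrix

/-- Real power of a Hermitian matrix, taken on its support: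
for `A = ∑ᵢ λᵢ |i⟩⟨i|`, `mpow A t = ∑_{i : λᵢ ≠ 0} λᵢ^t |i⟩⟨i|`.
(For non-Hermitian input we return the junk value `0`.) -/
noncomputable def mpow {n : Type*} [Fintype n] [DecidableEq n]
    (A : Matrix n n ℂ) (t : ℝ) : Matrix n n ℂ :=
  if h : A.IsHermitian then
    (h.eigenvectorUnitary : Matrix n n ℂ) *
      Matrix.diagonal (fun i => ((if h.eigenvalues i = 0 then (0:ℝ)
        else (h.eigenvalues i) ^ t) : ℂ)) *
      (star h.eigenvectorUnitary : Matrix n n ℂ)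
  else 0

/-- The reduced matrix `ρ_AC` of a tripartite matrix, viewed as the operator
`ρ_AC ⊗ I_B` on the full space. -/
noncomputable def redAC {dA dB dC : ℕ}
    (ρ : Matrix (Fin dA × Fin dB × Fin dC) (Fin dA × Fin dB × Fin dC) ℂ) :
    Matrix (Fin dA × Fin dB × Fin dC) (Fin dA × Fin dB × Fin dC) ℂ :=
  fun x y => (if x.2.1 = y.2.1 then (1:ℂ) else 0) *
    ∑ m : Fin dB, ρ (x.1, m, x.2.2) (y.1, m, y.2.2)

/-- The reduced matrix `ρ_BC` of a tripartite matrix, viewed as the operator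
`I_A ⊗ ρ_BC` on the full space. -/
noncomputable def redBC {dA dB dC : ℕ}
    (ρ : Matrix (Fin dA × Fin dB × Fin dC) (Fin dA × Fin dB × Fin dC) ℂ) :
    Matrix (Fin dA × Fin dB × Fin dC) (Fin dA × Fin dB × Fin dC) ℂ :=
  fun x y => (if x.1 = y.1 then (1:ℂ) else 0) * ∑ m : Fin dA, ρ (m, x.2) (m, y.2)

/-- The reduced matrix `ρ_C` of a tripartite matrix, viewed as the operator
`I_A ⊗ I_B ⊗ ρ_C` on the full space. -/
noncomputable def redC {dA dB dC : ℕ}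
    (ρ : Matrix (Fin dA × Fin dB × Fin dC) (Fin dA × Fin dB × Fin dC) ℂ) :
    Matrix (Fin dA × Fin dB × Fin dC) (Fin dA × Fin dB × Fin dC) ℂ :=
  fun x y => (if x.1 = y.1 then (1:ℂ) else 0) * (if x.2.1 = y.2.1 then (1:ℂ) else 0) *
    ∑ m : Fin dA, ∑ l : Fin dB, ρ (m, l, x.2.2) (m, l, y.2.2)

/-- The Schatten-type functional `‖X‖_β = (Tr{(X†X)^{β/2}})^{1/β}`. -/
noncomputable def mnorm {n : Type*} [Fintype n] [DecidableEq n]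
    (X : Matrix n n ℂ) (β : ℝ) : ℝ :=
  ((mpow (Xᴴ * X) (β/2)).trace.re) ^ β⁻¹

/-- The Rényi conditional mutual information `I_α(A;B|C)_ρ`. -/
noncomputable def IRenyi {dA dB dC : ℕ} (α : ℝ)
    (ρ : Matrix (Fin dA × Fin dB × Fin dC) (Fin dA × Fin dB × Fin dC) ℂ) : ℝ :=
  (α - 1)⁻¹ * Real.log
    ((mpow ρ α * mpow (redAC ρ) ((1 - α)/2) * mpow (redC ρ) ((α - 1)/2) *
      mpow (redBC ρ) (1 - α) * mpow (redC ρ) ((α - 1)/2) *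
      mpow (redAC ρ) ((1 - α)/2)).trace.re)

/-- The sandwiched Rényi conditional mutual information `Ĩ_α(A;B|C)_ρ`. -/
noncomputable def ITilde {dA dB dC : ℕ} (α : ℝ)
    (ρ : Matrix (Fin dA × Fin dB × Fin dC) (Fin dA × Fin dB × Fin dC) ℂ) : ℝ :=
  (2*α/(α - 1)) * Real.log (mnorm
    (mpow ρ (1/2) * mpow (redAC ρ) ((1 - α)/(2*α)) * mpow (redC ρ) ((α - 1)/(2*α)) *
      mpow (redBC ρ) ((1 - α)/(2*α))) (2*α))

/-- `ρ_ABC` is a short quantum Markov chain `A−C−B` if it is recovered by the Petz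
recovery channel acting on `C` alone:
`ρ_ABC = ρ_AC^{1/2} ρ_C^{−1/2} ρ_BC ρ_C^{−1/2} ρ_AC^{1/2}`. -/
def IsShortMarkov {dA dB dC : ℕ}
    (ρ : Matrix (Fin dA × Fin dB × Fin dC) (Fin dA × Fin dB × Fin dC) ℂ) : Prop :=
  ρ = mpow (redAC ρ) (1/2) * mpow (redC ρ) (-(1/2)) * redBC ρ *
        mpow (redC ρ) (-(1/2)) * mpow (redAC ρ) (1/2)


theorem crpow_ofReal (x t : ℝ) (h : 0 < x) : ((x : ℂ) ^ t : ℂ) = ((x ^ t : ℝ) : ℂ) := by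
  have := CFC.rpow_algebraMap (A := ℂ) (x := ⟨x, h.le⟩) (y := t)
  exact this

section MP
variable {n : Type*} [Fintype n] [DecidableEq n]

theorem mpow_eq_cfc {A : Matrix n n ℂ} (hA : A.PosDef) (t : ℝ) :
    mpow A t = cfc (fun x : ℝ => x ^ t) A := by
  rw [hA.1.cfc_eq, mpow, dif_pos hA.1, Matrix.IsHermitian.cfc, Unitary.conjStarAlgAut_apply]
  congr 3
  ext i
  have h := hA.eigenvalues_pos i
  simp [h.ne', crpow_ofReal _ _ h]

theorem mpow_rep {A : Matrix n n ℂ} (hA : A.PosDef) (t : ℝ) :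
    mpow A t = (hA.1.eigenvectorUnitary : Matrix n n ℂ) *
      Matrix.diagonal (fun i => ((hA.1.eigenvalues i ^ t : ℝ) : ℂ)) *
      (hA.1.eigenvectorUnitary : Matrix n n ℂ)ᴴ := by
  rw [mpow, dif_pos hA.1]
  congr 3
  ext i
  have h := hA.eigenvalues_pos i
  simp [h.ne', crpow_ofReal _ _ h]

theorem cont_spec {A : Matrix n n ℂ} (hA : A.IsHermitian) (f : ℝ → ℝ) :
    ContinuousOn f (spectrum ℝ A) := by
  have : (spectrum ℝ A).Finite := by
    rw [hA.spectrum_real_eq_range_eigenvalues]; exact Set.finite_range _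
  exact this.continuousOn f

theorem spec_pos {A : Matrix n n ℂ} (hA : A.PosDef) : ∀ x ∈ spectrum ℝ A, 0 < x := by
  intro x hx
  rw [hA.1.spectrum_real_eq_range_eigenvalues] at hx
  obtain ⟨i, rfl⟩ := hx
  exact hA.eigenvalues_pos i

theorem mpow_add {A : Matrix n n ℂ} (hA : A.PosDef) (s t : ℝ) :
    mpow A s * mpow A t = mpow A (s + t) := by
  rw [mpow_eq_cfc hA, mpow_eq_cfc hA, mpow_eq_cfc hA,
    ← cfc_mul _ _ A (cont_spec hA.1 _) (cont_spec hA.1 _)]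
  refine cfc_congr fun x hx => ?_
  exact (Real.rpow_add (spec_pos hA x hx) s t).symm

theorem mpow_zero' {A : Matrix n n ℂ} (hA : A.PosDef) : mpow A 0 = 1 := by
  rw [mpow_eq_cfc hA]
  simp only [Real.rpow_zero]
  exact cfc_const_one ℝ A hA.1

theorem mpow_one' {A : Matrix n n ℂ} (hA : A.PosDef) : mpow A 1 = A := by
  rw [mpow_eq_cfc hA]
  simp only [Real.rpow_one]
  exact cfc_id' ℝ A hA.1

theorem mpow_herm {A : Matrix n n ℂ} (hA : A.PosDef) (t : ℝ) : (mpow A t)ᴴ = mpow A t := by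
  rw [mpow_eq_cfc hA]
  exact (cfc_predicate (fun x : ℝ => x ^ t) A : IsSelfAdjoint _)

theorem mpow_posDef {A : Matrix n n ℂ} (hA : A.PosDef) (t : ℝ) : (mpow A t).PosDef := by
  have h : mpow A t = (mpow A (t/2))ᴴ * mpow A (t/2) := by
    rw [mpow_herm hA, mpow_add hA]; ring_nf
  rw [h]
  refine Matrix.PosDef.conjTranspose_mul_self _ ?_
  refine Matrix.mulVec_injective_of_isUnit ?_
  refine IsUnit.of_mul_eq_one (mpow A (-(t/2))) ?_
  rw [mpow_add hA, add_neg_cancel, mpow_zero' hA]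

theorem mpow_mul {A : Matrix n n ℂ} (hA : A.PosDef) (s t : ℝ) :
    mpow (mpow A s) t = mpow A (s * t) := by
  rw [mpow_eq_cfc (mpow_posDef hA s), mpow_eq_cfc hA s, mpow_eq_cfc hA]
  have hcomp := (cfc_comp' (fun x : ℝ => x ^ t) (fun x : ℝ => x ^ s) A
    (Set.Finite.continuousOn (Set.Finite.image _ (by
      rw [hA.1.spectrum_real_eq_range_eigenvalues]; exact Set.finite_range _)) _)
    (cont_spec hA.1 _) hA.1).symm
  refine hcomp.trans ?_
  refine cfc_congr fun x hx => ?_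
  exact (Real.rpow_mul (spec_pos hA x hx).le s t).symm

theorem mpow_cancel {A : Matrix n n ℂ} (hA : A.PosDef) (t : ℝ) : mpow A t * mpow A (-t) = 1 := by
  rw [mpow_add hA, add_neg_cancel, mpow_zero' hA]

theorem mpow_cancel' {A : Matrix n n ℂ} (hA : A.PosDef) (t : ℝ) : mpow A (-t) * mpow A t = 1 := by
  rw [mpow_add hA, neg_add_cancel, mpow_zero' hA]

theorem mpow_sq {A : Matrix n n ℂ} (hA : A.PosDef) : mpow A (1/2) * mpow A (1/2) = A := by
  rw [mpow_add hA, add_halves, mpow_one' hA]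

variable {m : Type*} [Fintype m] [DecidableEq m]

theorem map_mpow (φ : Matrix m m ℂ →⋆ₐ[ℂ] Matrix n n ℂ) {A : Matrix m m ℂ} (hA : A.PosDef)
    (hφA : (φ A).PosDef) (t : ℝ) : φ (mpow A t) = mpow (φ A) t := by
  rw [mpow_eq_cfc hA, mpow_eq_cfc hφA]
  have hc : Continuous φ := φ.toAlgHom.toLinearMap.continuous_of_finiteDimensional
  exact StarAlgHom.map_cfc (S := ℂ) φ _ A (cont_spec hA.1 _) hc hA.1 hφA.1

theorem map_posDef (φ : Matrix m m ℂ →⋆ₐ[ℂ] Matrix n n ℂ) {A : Matrix m m ℂ} (hA : A.PosDef) :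
    (φ A).PosDef := by
  have h : φ A = (φ (mpow A (1/2)))ᴴ * φ (mpow A (1/2)) := by
    rw [← Matrix.star_eq_conjTranspose, ← map_star, ← map_mul, Matrix.star_eq_conjTranspose,
      mpow_herm hA, mpow_sq hA]
  rw [h]
  refine Matrix.PosDef.conjTranspose_mul_self _ ?_
  refine Matrix.mulVec_injective_of_isUnit ?_
  refine IsUnit.of_mul_eq_one (φ (mpow A (-(1/2)))) ?_
  rw [← map_mul, mpow_cancel hA, map_one]

end MP

section Core
variable {ι κ : Type*} [Fintype ι] [Fintype κ]

theorem core_polar (V : (ι → ℂ) →ₗ[ℂ] (κ → ℂ))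
    (h1 : ∀ z, ∑ k, Complex.normSq (V z k) = ∑ i, Complex.normSq (z i)) (z w : ι → ℂ) :
    ∑ k, (V z k * star (V w k)).re = ∑ i, (z i * star (w i)).re := by
  have h := h1 (z + w)
  simp only [map_add, Pi.add_apply, Complex.normSq_add, Finset.sum_add_distrib, h1,
    ← Finset.mul_sum] at h
  simp only [Complex.star_def]
  linarith

theorem core_ident (V : (ι → ℂ) →ₗ[ℂ] (κ → ℂ)) (a : ι → ℝ) (b : κ → ℝ)
    (ha : ∀ i, 0 < a i) (hb : ∀ k, 0 < b k)
    (h1 : ∀ z, ∑ k, Complex.normSq (V z k) = ∑ i, Complex.normSq (z i))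
    (h2 : ∀ z, ∑ k, b k * Complex.normSq (V z k) = ∑ i, a i * Complex.normSq (z i))
    (ξ : ι → ℂ) (s : ℝ) (hs : 0 < s) :
    ∑ k, (b k + s) * Complex.normSq (V ξ k / (b k + s : ℝ) - V (fun i => ξ i / (a i + s : ℝ)) k)
      = ∑ k, Complex.normSq (V ξ k) / (b k + s) - ∑ i, Complex.normSq (ξ i) / (a i + s) := by
  set ζ : ι → ℂ := fun i => ξ i / (a i + s : ℝ) with hζ
  have e1 : ∀ k, (b k + s) * Complex.normSq (V ξ k / (b k + s : ℝ) - V ζ k)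
      = Complex.normSq (V ξ k) / (b k + s) - 2 * (V ξ k * star (V ζ k)).re
        + (b k * Complex.normSq (V ζ k) + s * Complex.normSq (V ζ k)) := by
    intro k
    have hk : 0 < b k + s := add_pos (hb k) hs
    rw [Complex.normSq_sub, Complex.normSq_div, Complex.normSq_ofReal, Complex.star_def,
      div_mul_eq_mul_div, Complex.div_ofReal_re]
    field_simp
    ring
  have e2 : ∀ i, (ξ i * star (ζ i)).re = Complex.normSq (ξ i) / (a i + s) := by
    intro i
    have hi : 0 < a i + s := add_pos (ha i) hs
    simp only [hζ, Complex.star_def, map_div₀, Complex.conj_ofReal]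
    rw [← mul_div_assoc, Complex.div_ofReal_re, Complex.mul_conj, Complex.ofReal_re]
  have e3 : ∀ i, a i * Complex.normSq (ζ i) + s * Complex.normSq (ζ i)
      = Complex.normSq (ξ i) / (a i + s) := by
    intro i
    have hi : 0 < a i + s := add_pos (ha i) hs
    simp only [hζ, Complex.normSq_div, Complex.normSq_ofReal]
    field_simp
  have E3 : ∑ i, a i * Complex.normSq (ζ i) + s * ∑ i, Complex.normSq (ζ i)
      = ∑ i, Complex.normSq (ξ i) / (a i + s) := by
    rw [Finset.mul_sum, ← Finset.sum_add_distrib, Finset.sum_congr rfl fun i _ => e3 i]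
  rw [Finset.sum_congr rfl fun k _ => e1 k, Finset.sum_add_distrib, Finset.sum_sub_distrib,
    ← Finset.mul_sum, core_polar V h1 ξ ζ, Finset.sum_add_distrib, h2, ← Finset.mul_sum, h1,
    E3, Finset.sum_congr rfl fun i _ => e2 i]
  ring

theorem core_poly (c : κ → ℂ) (x : κ → ℝ) (hx : ∀ k, 0 < x k)
    (h : ∀ s : ℝ, 0 < s → ∑ k, c k / (x k + s : ℝ) = 0) (g : ℝ → ℝ) :
    ∑ k, c k * g (x k) = 0 := by
  classical
  set S : Finset ℝ := Finset.univ.image x with hS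
  have hmem : ∀ k, x k ∈ S := fun k => Finset.mem_image_of_mem _ (Finset.mem_univ k)
  let P : Polynomial ℂ := ∑ k, Polynomial.C (c k) *
    ∏ y ∈ S.erase (x k), (Polynomial.X + Polynomial.C (y : ℂ))
  have hev : ∀ z : ℂ, P.eval z = ∑ k, c k * ∏ y ∈ S.erase (x k), (z + y) := by
    intro z
    simp [P, Polynomial.eval_finsetSum, Polynomial.eval_prod]
  have hP : P = 0 := by
    refine Polynomial.eq_zero_of_infinite_isRoot _ ?_
    refine Set.Infinite.mono (s := (fun s : ℝ => (s : ℂ)) '' Set.Ioi 0) ?_ ?_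
    · rintro _ ⟨s, hs, rfl⟩
      have hs' : (0:ℝ) < s := hs
      simp only [Set.mem_ofPred_eq, Polynomial.IsRoot]
      rw [hev]
      have : ∀ k, c k * ∏ y ∈ S.erase (x k), ((s:ℂ) + y)
          = (∏ y ∈ S, ((s:ℂ) + y)) * (c k / (x k + s : ℝ)) := by
        intro k
        rw [← Finset.mul_prod_erase S _ (hmem k)]
        have h0 : ((s:ℂ) + x k) ≠ 0 := by
          have := hx k
          rw [← Complex.ofReal_add]
          exact Complex.ofReal_ne_zero.mpr (by positivity)
        rw [Complex.ofReal_add, add_comm (x k : ℂ)]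
        field_simp
      rw [Finset.sum_congr rfl fun k _ => this k, ← Finset.mul_sum, h s hs', mul_zero]
    · exact (Set.Ioi_infinite (0:ℝ)).image (Complex.ofReal_injective.injOn)
  have hfib : ∀ y0 ∈ S, ∑ k with x k = y0, c k = 0 := by
    intro y0 hy0
    have h0 := hev (-(y0 : ℂ))
    rw [hP, Polynomial.eval_zero] at h0
    have hsplit : ∑ k, c k * ∏ y ∈ S.erase (x k), (-(y0:ℂ) + y)
        = ∑ k with x k = y0, c k * ∏ y ∈ S.erase y0, (-(y0:ℂ) + y) := by
      rw [Finset.sum_filter]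
      refine Finset.sum_congr rfl fun k _ => ?_
      split_ifs with hk
      · rw [hk]
      · rw [Finset.prod_eq_zero (i := y0), mul_zero]
        · exact Finset.mem_erase.mpr ⟨fun h => hk h.symm, hy0⟩
        · simp
    rw [hsplit, ← Finset.sum_mul] at h0
    refine (mul_eq_zero.mp h0.symm).resolve_right ?_
    refine Finset.prod_ne_zero_iff.mpr fun y hy => ?_
    have := (Finset.mem_erase.mp hy).1
    intro h
    apply this
    have h' : (y:ℂ) = y0 := by linear_combination h
    exact_mod_cast h'
  rw [← Finset.sum_fiberwise_of_maps_to (s := Finset.univ) (t := S) (g := x) (fun k _ => hmem k)]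
  refine Finset.sum_eq_zero fun y hy => ?_
  have : ∀ k ∈ Finset.univ.filter (fun k => x k = y), c k * (g (x k) : ℂ) = c k * g y := by
    intro k hk
    rw [(Finset.mem_filter.mp hk).2]
  rw [Finset.sum_congr rfl this, ← Finset.sum_mul, hfib y hy, zero_mul]

/-- from resolvent identities to arbitrary functions -/
theorem core_fun (V : (ι → ℂ) →ₗ[ℂ] (κ → ℂ)) (a : ι → ℝ) (b : κ → ℝ)
    (ha : ∀ i, 0 < a i) (hb : ∀ k, 0 < b k)
    (h1 : ∀ z, ∑ k, Complex.normSq (V z k) = ∑ i, Complex.normSq (z i))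
    (h2 : ∀ z, ∑ k, b k * Complex.normSq (V z k) = ∑ i, a i * Complex.normSq (z i))
    (ξ : ι → ℂ)
    (hF : ∀ s : ℝ, 0 < s → ∑ k, Complex.normSq (V ξ k) / (b k + s)
      - ∑ i, Complex.normSq (ξ i) / (a i + s) = 0) (g : ℝ → ℝ) (k : κ) :
    V (fun i => ξ i * g (a i)) k = V ξ k * g (b k) := by
  classical
  have hres : ∀ s : ℝ, 0 < s → V ξ k / (b k + s : ℝ) = V (fun i => ξ i / (a i + s : ℝ)) k := by
    intro s hs
    have h := core_ident V a b ha hb h1 h2 ξ s hs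
    rw [hF s hs] at h
    have hnn : ∀ j ∈ (Finset.univ : Finset κ), 0 ≤ (b j + s) * Complex.normSq
        (V ξ j / (b j + s : ℝ) - V (fun i => ξ i / (a i + s : ℝ)) j) := fun j _ =>
      mul_nonneg (add_pos (hb j) hs).le (Complex.normSq_nonneg _)
    have h0 := (Finset.sum_eq_zero_iff_of_nonneg hnn).mp h k (Finset.mem_univ k)
    have h3 := (mul_eq_zero.mp h0).resolve_left (add_pos (hb k) hs).ne'
    exact sub_eq_zero.mp (Complex.normSq_eq_zero.mp h3)
  have hV : ∀ z : ι → ℂ, V z k = ∑ i, z i * V (Pi.single i 1) k := by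
    intro z
    conv_lhs => rw [← Finset.univ_sum_single z]
    rw [map_sum, Finset.sum_apply]
    refine Finset.sum_congr rfl fun i _ => ?_
    rw [show (Pi.single i (z i) : ι → ℂ) = z i • Pi.single i 1 by
      rw [← Pi.single_smul]; simp, map_smul]
    rfl
  have key := core_poly (κ := Option ι)
    (fun o => o.elim (- V ξ k) (fun i => ξ i * V (Pi.single i 1) k))
    (fun o => o.elim (b k) a) (by rintro (_ | i); exacts [hb k, ha i]) (by
      intro s hs
      have := hres s hs
      rw [hV (fun i => ξ i / (a i + s : ℝ))] at this
      rw [Fintype.sum_option]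
      simp only [Option.elim]
      rw [neg_div, this, neg_add_eq_zero]
      refine Finset.sum_congr rfl fun i _ => ?_
      ring) g
  rw [Fintype.sum_option] at key
  simp only [Option.elim] at key
  rw [hV]
  have e : ∑ i, ξ i * (g (a i) : ℂ) * V (Pi.single i 1) k
      = ∑ i, ξ i * V (Pi.single i 1) k * g (a i) :=
    Finset.sum_congr rfl fun i _ => by ring
  rw [e]
  linear_combination key

open MeasureTheory in
theorem zero_of_int (f : ℝ → ℝ) (hc : ContinuousOn f (Set.Ioi 0))
    (hi : IntegrableOn f (Set.Ioi 0)) (hn : ∀ s, 0 < s → 0 ≤ f s)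
    (hle0 : ∫ s in Set.Ioi 0, f s ≤ 0) : ∀ s, 0 < s → f s = 0 := by
  have hnn : 0 ≤ᵐ[volume.restrict (Set.Ioi (0:ℝ))] f := by
    refine (ae_restrict_iff' measurableSet_Ioi).mpr (Filter.Eventually.of_forall fun s hs => hn s hs)
  have h0 : ∫ s in Set.Ioi 0, f s = 0 := le_antisymm hle0 (integral_nonneg_of_ae hnn)
  have hae := (integral_eq_zero_iff_of_nonneg_ae hnn hi).mp h0
  have := Measure.eqOn_open_of_ae_eq hae isOpen_Ioi hc continuousOn_const
  exact fun s hs => this hs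

open MeasureTheory Real in
theorem core_int_pos (u b : κ → ℝ) (w a : ι → ℝ) (ha : ∀ i, 0 < a i) (hb : ∀ k, 0 < b k)
    (h1 : ∑ k, u k = ∑ i, w i)
    (hF : ∀ s : ℝ, 0 < s → 0 ≤ ∑ k, u k / (b k + s) - ∑ i, w i / (a i + s))
    (p : ℝ) (hp : p ∈ Set.Ioo (0:ℝ) 1) (h : ∑ i, w i * a i ^ p ≤ ∑ k, u k * b k ^ p) :
    ∀ s : ℝ, 0 < s → ∑ k, u k / (b k + s) - ∑ i, w i / (a i + s) = 0 := by
  let f : ℝ → ℝ := fun s => ∑ i, w i * rpowIntegrand₀₁ p s (a i)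
    - ∑ k, u k * rpowIntegrand₀₁ p s (b k)
  have hf : ∀ s, f s = s ^ p * (∑ k, u k / (b k + s) - ∑ i, w i / (a i + s)) := by
    intro s
    have e1 : ∀ i, w i * rpowIntegrand₀₁ p s (a i)
        = s ^ p * s⁻¹ * w i - s ^ p * (w i / (a i + s)) := by
      intro i; rw [rpowIntegrand₀₁, add_comm s]; ring
    have e2 : ∀ i, u i * rpowIntegrand₀₁ p s (b i)
        = s ^ p * s⁻¹ * u i - s ^ p * (u i / (b i + s)) := by
      intro i; rw [rpowIntegrand₀₁, add_comm s]; ring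
    simp only [f, e1, e2, Finset.sum_sub_distrib, ← Finset.mul_sum, h1]
    ring
  have hia : ∀ i, IntegrableOn (fun s => w i * rpowIntegrand₀₁ p s (a i)) (Set.Ioi 0) :=
    fun i => (integrableOn_rpowIntegrand₀₁_Ioi hp (ha i).le).const_mul _
  have hib : ∀ i, IntegrableOn (fun s => u i * rpowIntegrand₀₁ p s (b i)) (Set.Ioi 0) :=
    fun i => (integrableOn_rpowIntegrand₀₁_Ioi hp (hb i).le).const_mul _
  have hz := zero_of_int f ?_ ?_ ?_ ?_
  · intro s hs
    have := hz s hs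
    rw [hf] at this
    exact (mul_eq_zero.mp this).resolve_left (rpow_pos_of_pos hs p).ne'
  · refine ContinuousOn.sub ?_ ?_
    · exact continuousOn_finsetSum _ fun i _ =>
        continuousOn_const.mul (continuousOn_rpowIntegrand₀₁ hp (ha i).le)
    · exact continuousOn_finsetSum _ fun i _ =>
        continuousOn_const.mul (continuousOn_rpowIntegrand₀₁ hp (hb i).le)
  · exact (integrable_finsetSum _ fun i _ => hia i).sub (integrable_finsetSum _ fun i _ => hib i)
  · intro s hs
    rw [hf]
    exact mul_nonneg (rpow_pos_of_pos hs p).le (hF s hs)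
  · have hC := integral_rpowIntegrand₀₁_one_pos hp
    simp only [f]
    rw [integral_sub (integrable_finsetSum _ fun i _ => hia i)
      (integrable_finsetSum _ fun i _ => hib i), integral_finsetSum _ fun i _ => hia i,
      integral_finsetSum _ fun i _ => hib i]
    simp only [integral_const_mul]
    have e1 : ∀ i, w i * ∫ s in Set.Ioi 0, rpowIntegrand₀₁ p s (a i)
        = w i * a i ^ p * ∫ s in Set.Ioi 0, rpowIntegrand₀₁ p s 1 := fun i => by
      rw [integral_rpowIntegrand₀₁_eq_rpow_mul_const hp (ha i).le]; ring
    have e2 : ∀ i, u i * ∫ s in Set.Ioi 0, rpowIntegrand₀₁ p s (b i)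
        = u i * b i ^ p * ∫ s in Set.Ioi 0, rpowIntegrand₀₁ p s 1 := fun i => by
      rw [integral_rpowIntegrand₀₁_eq_rpow_mul_const hp (hb i).le]; ring
    rw [Finset.sum_congr rfl fun i _ => e1 i, Finset.sum_congr rfl fun i _ => e2 i,
      ← Finset.sum_mul, ← Finset.sum_mul, ← sub_mul]
    exact mul_nonpos_of_nonpos_of_nonneg (by linarith) hC.le

open MeasureTheory Real in
theorem core_int_neg (u b : κ → ℝ) (w a : ι → ℝ) (ha : ∀ i, 0 < a i) (hb : ∀ k, 0 < b k)
    (hF : ∀ s : ℝ, 0 < s → 0 ≤ ∑ k, u k / (b k + s) - ∑ i, w i / (a i + s))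
    (p : ℝ) (hp : p ∈ Set.Ioo (-1:ℝ) 0) (h : ∑ k, u k * b k ^ p ≤ ∑ i, w i * a i ^ p) :
    ∀ s : ℝ, 0 < s → ∑ k, u k / (b k + s) - ∑ i, w i / (a i + s) = 0 := by
  have hq : p + 1 ∈ Set.Ioo (0:ℝ) 1 := ⟨by linarith [hp.1], by linarith [hp.2]⟩
  let f : ℝ → ℝ := fun s => ∑ k, u k / b k * rpowIntegrand₀₁ (p+1) s (b k)
    - ∑ i, w i / a i * rpowIntegrand₀₁ (p+1) s (a i)
  have hf : ∀ s, 0 < s → f s = s ^ p * (∑ k, u k / (b k + s) - ∑ i, w i / (a i + s)) := by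
    intro s hs
    have e : ∀ v x : ℝ, 0 < x → v / x * rpowIntegrand₀₁ (p+1) s x = s ^ p * (v / (x + s)) := by
      intro v x hx
      rw [rpowIntegrand₀₁_eq_pow_div hq hs.le hx.le, add_sub_cancel_right, add_comm s]
      field_simp
    simp only [f]
    rw [Finset.sum_congr rfl fun k _ => e (u k) (b k) (hb k),
      Finset.sum_congr rfl fun k _ => e (w k) (a k) (ha k), ← Finset.mul_sum, ← Finset.mul_sum,
      mul_sub]
  have hia : ∀ i, IntegrableOn (fun s => w i / a i * rpowIntegrand₀₁ (p+1) s (a i)) (Set.Ioi 0) :=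
    fun i => (integrableOn_rpowIntegrand₀₁_Ioi hq (ha i).le).const_mul _
  have hib : ∀ i, IntegrableOn (fun s => u i / b i * rpowIntegrand₀₁ (p+1) s (b i)) (Set.Ioi 0) :=
    fun i => (integrableOn_rpowIntegrand₀₁_Ioi hq (hb i).le).const_mul _
  have hz := zero_of_int f ?_ ?_ ?_ ?_
  · intro s hs
    have := hz s hs
    rw [hf s hs] at this
    exact (mul_eq_zero.mp this).resolve_left (rpow_pos_of_pos hs p).ne'
  · refine ContinuousOn.sub ?_ ?_
    · exact continuousOn_finsetSum _ fun i _ =>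
        continuousOn_const.mul (continuousOn_rpowIntegrand₀₁ hq (hb i).le)
    · exact continuousOn_finsetSum _ fun i _ =>
        continuousOn_const.mul (continuousOn_rpowIntegrand₀₁ hq (ha i).le)
  · exact (integrable_finsetSum _ fun i _ => hib i).sub (integrable_finsetSum _ fun i _ => hia i)
  · intro s hs
    rw [hf s hs]
    exact mul_nonneg (rpow_pos_of_pos hs p).le (hF s hs)
  · have hC := integral_rpowIntegrand₀₁_one_pos hq
    simp only [f]
    rw [integral_sub (integrable_finsetSum _ fun i _ => hib i)
      (integrable_finsetSum _ fun i _ => hia i), integral_finsetSum _ fun i _ => hia i,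
      integral_finsetSum _ fun i _ => hib i]
    simp only [integral_const_mul]
    have e : ∀ v x : ℝ, 0 < x → v / x * ∫ s in Set.Ioi 0, rpowIntegrand₀₁ (p+1) s x
        = v * x ^ p * ∫ s in Set.Ioi 0, rpowIntegrand₀₁ (p+1) s 1 := fun v x hx => by
      rw [integral_rpowIntegrand₀₁_eq_rpow_mul_const hq hx.le, rpow_add hx, rpow_one]
      field_simp
    rw [Finset.sum_congr rfl fun i _ => e (u i) (b i) (hb i),
      Finset.sum_congr rfl fun i _ => e (w i) (a i) (ha i),
      ← Finset.sum_mul, ← Finset.sum_mul, ← sub_mul]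
    exact mul_nonpos_of_nonpos_of_nonneg (by linarith) hC.le

theorem core_nonneg (V : (ι → ℂ) →ₗ[ℂ] (κ → ℂ)) (a : ι → ℝ) (b : κ → ℝ)
    (ha : ∀ i, 0 < a i) (hb : ∀ k, 0 < b k)
    (h1 : ∀ z, ∑ k, Complex.normSq (V z k) = ∑ i, Complex.normSq (z i))
    (h2 : ∀ z, ∑ k, b k * Complex.normSq (V z k) = ∑ i, a i * Complex.normSq (z i))
    (ξ : ι → ℂ) (s : ℝ) (hs : 0 < s) :
    0 ≤ ∑ k, Complex.normSq (V ξ k) / (b k + s) - ∑ i, Complex.normSq (ξ i) / (a i + s) := by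
  rw [← core_ident V a b ha hb h1 h2 ξ s hs]
  exact Finset.sum_nonneg fun j _ =>
    mul_nonneg (add_pos (hb j) hs).le (Complex.normSq_nonneg _)

theorem core_nonpos (V : (ι → ℂ) →ₗ[ℂ] (κ → ℂ)) (a : ι → ℝ) (b : κ → ℝ)
    (ha : ∀ i, 0 < a i) (hb : ∀ k, 0 < b k)
    (h1 : ∀ z, ∑ k, Complex.normSq (V z k) = ∑ i, Complex.normSq (z i))
    (h2 : ∀ z, ∑ k, (b k)⁻¹ * Complex.normSq (V z k) = ∑ i, (a i)⁻¹ * Complex.normSq (z i))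
    (ξ : ι → ℂ) (s : ℝ) (hs : 0 < s) :
    ∑ k, Complex.normSq (V ξ k) / (b k + s) - ∑ i, Complex.normSq (ξ i) / (a i + s) ≤ 0 := by
  have h := core_nonneg V (fun i => (a i)⁻¹) (fun k => (b k)⁻¹) (fun i => inv_pos.mpr (ha i))
    (fun i => inv_pos.mpr (hb i)) h1 h2 ξ s⁻¹ (inv_pos.mpr hs)
  have e : ∀ v x : ℝ, 0 < x → v / (x⁻¹ + s⁻¹) = s * v - s ^ 2 * (v / (x + s)) := by
    intro v x hx
    have : x + s ≠ 0 := (add_pos hx hs).ne'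
    have : s + x ≠ 0 := (add_pos hs hx).ne'
    field_simp
    ring
  rw [Finset.sum_congr rfl fun k _ => e (Complex.normSq (V ξ k)) (b k) (hb k),
    Finset.sum_congr rfl fun k _ => e (Complex.normSq (ξ k)) (a k) (ha k),
    Finset.sum_sub_distrib, Finset.sum_sub_distrib, ← Finset.mul_sum, ← Finset.mul_sum,
    ← Finset.mul_sum, ← Finset.mul_sum, h1] at h
  have h' : 0 ≤ s ^ 2 * (∑ i, Complex.normSq (ξ i) / (a i + s)
      - ∑ k, Complex.normSq (V ξ k) / (b k + s)) := by linarith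
  have := nonneg_of_mul_nonneg_right h' (by positivity)
  linarith

end Core

section Coord
variable {n : Type*} [Fintype n] [DecidableEq n]

/-- coordinates of a matrix with respect to the eigenbases of `L` and `R` -/
noncomputable def coordM {L R : Matrix n n ℂ} (hL : L.PosDef) (hR : R.PosDef) :
    Matrix n n ℂ →ₗ[ℂ] (n × n → ℂ) where
  toFun Y := fun p => ((hL.1.eigenvectorUnitary : Matrix n n ℂ)ᴴ * Y *
    (hR.1.eigenvectorUnitary : Matrix n n ℂ)) p.1 p.2
  map_add' Y Z := by ext p; simp [Matrix.mul_add, Matrix.add_mul]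
  map_smul' c Y := by ext p; simp

/-- inverse of `coordM` -/
noncomputable def uncoordM {L R : Matrix n n ℂ} (hL : L.PosDef) (hR : R.PosDef) :
    (n × n → ℂ) →ₗ[ℂ] Matrix n n ℂ where
  toFun z := (hL.1.eigenvectorUnitary : Matrix n n ℂ) * Matrix.of (fun i j => z (i, j)) *
    (hR.1.eigenvectorUnitary : Matrix n n ℂ)ᴴ
  map_add' Y Z := by
    rw [← Matrix.add_mul, ← Matrix.mul_add]; rfl
  map_smul' c Y := by
    rw [RingHom.id_apply, ← Matrix.smul_mul, ← Matrix.mul_smul]; rfl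

theorem eU_left {L : Matrix n n ℂ} (hL : L.PosDef) :
    (hL.1.eigenvectorUnitary : Matrix n n ℂ)ᴴ * (hL.1.eigenvectorUnitary : Matrix n n ℂ) = 1 := by
  rw [← Matrix.star_eq_conjTranspose]; exact Unitary.coe_star_mul_self _

theorem eU_right {L : Matrix n n ℂ} (hL : L.PosDef) :
    (hL.1.eigenvectorUnitary : Matrix n n ℂ) * (hL.1.eigenvectorUnitary : Matrix n n ℂ)ᴴ = 1 := by
  rw [← Matrix.star_eq_conjTranspose]; exact Unitary.coe_mul_star_self _

theorem uncoord_coord {L R : Matrix n n ℂ} (hL : L.PosDef) (hR : R.PosDef) (Y : Matrix n n ℂ) :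
    uncoordM hL hR (coordM hL hR Y) = Y := by
  have h1 := eU_right hL
  have h2 := eU_right hR
  change (hL.1.eigenvectorUnitary : Matrix n n ℂ) *
    ((hL.1.eigenvectorUnitary : Matrix n n ℂ)ᴴ * Y *
    (hR.1.eigenvectorUnitary : Matrix n n ℂ)) * (hR.1.eigenvectorUnitary : Matrix n n ℂ)ᴴ = Y
  generalize (hL.1.eigenvectorUnitary : Matrix n n ℂ) = U at *
  generalize (hR.1.eigenvectorUnitary : Matrix n n ℂ) = W at *
  calc U * (Uᴴ * Y * W) * Wᴴ = (U * Uᴴ) * Y * (W * Wᴴ) := by simp only [Matrix.mul_assoc]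
    _ = Y := by rw [h1, h2, Matrix.one_mul, Matrix.mul_one]

theorem coord_mpow {L R : Matrix n n ℂ} (hL : L.PosDef) (hR : R.PosDef) (Y : Matrix n n ℂ)
    (w : ℝ) (p : n × n) :
    coordM hL hR (mpow L w * Y * mpow R (-w)) p = coordM hL hR Y p *
      (((hL.1.eigenvalues p.1 / hR.1.eigenvalues p.2) ^ w : ℝ) : ℂ) := by
  have h1 := eU_left hL
  have h2 := eU_left hR
  rw [mpow_rep hL, mpow_rep hR, Real.div_rpow (hL.eigenvalues_pos _).le (hR.eigenvalues_pos _).le,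
    div_eq_mul_inv, ← Real.rpow_neg (hR.eigenvalues_pos _).le]
  change ((hL.1.eigenvectorUnitary : Matrix n n ℂ)ᴴ * (_ : Matrix n n ℂ) *
    (hR.1.eigenvectorUnitary : Matrix n n ℂ) : Matrix n n ℂ) p.1 p.2 =
    ((hL.1.eigenvectorUnitary : Matrix n n ℂ)ᴴ * Y *
    (hR.1.eigenvectorUnitary : Matrix n n ℂ)) p.1 p.2 * _
  generalize (hL.1.eigenvectorUnitary : Matrix n n ℂ) = U at *
  generalize (hR.1.eigenvectorUnitary : Matrix n n ℂ) = W at *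
  have e : ∀ D E : Matrix n n ℂ, Uᴴ * (U * D * Uᴴ * Y * (W * E * Wᴴ)) * W
      = D * (Uᴴ * Y * W) * E := by
    intro D E
    calc _ = (Uᴴ * U) * D * (Uᴴ * Y * W) * E * (Wᴴ * W) := by simp only [Matrix.mul_assoc]
      _ = _ := by rw [h1, h2, Matrix.one_mul, Matrix.mul_one]
  rw [e, Matrix.mul_diagonal, Matrix.diagonal_mul]
  push_cast
  ring

theorem coord_inner {L R : Matrix n n ℂ} (hL : L.PosDef) (hR : R.PosDef) (Y Z : Matrix n n ℂ) :
    (Yᴴ * Z).trace = ∑ p, star (coordM hL hR Y p) * coordM hL hR Z p := by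
  have h1 := eU_right hL
  have h2 := eU_right hR
  change _ = ∑ p : n × n, star (((hL.1.eigenvectorUnitary : Matrix n n ℂ)ᴴ * Y *
    (hR.1.eigenvectorUnitary : Matrix n n ℂ)) p.1 p.2) *
    ((hL.1.eigenvectorUnitary : Matrix n n ℂ)ᴴ * Z *
    (hR.1.eigenvectorUnitary : Matrix n n ℂ)) p.1 p.2
  generalize (hL.1.eigenvectorUnitary : Matrix n n ℂ) = U at *
  generalize (hR.1.eigenvectorUnitary : Matrix n n ℂ) = W at *
  have e : ∀ A B : Matrix n n ℂ, ∑ p : n × n, star (A p.1 p.2) * B p.1 p.2 = (Aᴴ * B).trace := by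
    intro A B
    rw [Fintype.sum_prod_type, Finset.sum_comm]
    simp [Matrix.trace, Matrix.mul_apply]
  rw [e]
  have e2 : (Uᴴ * Y * W)ᴴ * (Uᴴ * Z * W) = Wᴴ * (Yᴴ * (U * Uᴴ) * Z * W) := by
    simp only [Matrix.conjTranspose_mul, Matrix.conjTranspose_conjTranspose, Matrix.mul_assoc]
  rw [e2, Matrix.trace_mul_comm Wᴴ, h1, Matrix.mul_one, Matrix.mul_assoc (Yᴴ * Z) W, h2,
    Matrix.mul_one]

theorem re_star_aux (c : ℂ) (r : ℝ) : (star c * (c * (r:ℂ))).re = r * Complex.normSq c := by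
  rw [← mul_assoc, mul_comm (star c), Complex.star_def, Complex.mul_conj,
    ← Complex.ofReal_mul, Complex.ofReal_re, mul_comm]

/-- quadratic form of the relative modular operator -/
theorem coord_quad {L R : Matrix n n ℂ} (hL : L.PosDef) (hR : R.PosDef) (Y : Matrix n n ℂ)
    (w : ℝ) :
    ∑ p : n × n, (hL.1.eigenvalues p.1 / hR.1.eigenvalues p.2) ^ w *
      Complex.normSq (coordM hL hR Y p) = (Yᴴ * (mpow L w * Y * mpow R (-w))).trace.re := by
  rw [coord_inner hL hR, Complex.re_sum]
  refine Finset.sum_congr rfl fun p _ => ?_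
  rw [coord_mpow, re_star_aux]

theorem coord_norm {L R : Matrix n n ℂ} (hL : L.PosDef) (hR : R.PosDef) (Y : Matrix n n ℂ) :
    ∑ p : n × n, Complex.normSq (coordM hL hR Y p) = (Yᴴ * Y).trace.re := by
  rw [coord_inner hL hR, Complex.re_sum]
  refine Finset.sum_congr rfl fun p _ => ?_
  rw [mul_comm (star _), Complex.star_def, Complex.mul_conj, Complex.ofReal_re]

theorem coord_inj {L R : Matrix n n ℂ} (hL : L.PosDef) (hR : R.PosDef) {Y Z : Matrix n n ℂ}
    (h : coordM hL hR Y = coordM hL hR Z) : Y = Z := by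
  rw [← uncoord_coord hL hR Y, h, uncoord_coord]

theorem coord_uncoord {L R : Matrix n n ℂ} (hL : L.PosDef) (hR : R.PosDef) (z : n × n → ℂ) :
    coordM hL hR (uncoordM hL hR z) = z := by
  have h1 := eU_left hL
  have h2 := eU_left hR
  ext p
  change ((hL.1.eigenvectorUnitary : Matrix n n ℂ)ᴴ * ((hL.1.eigenvectorUnitary : Matrix n n ℂ) *
    Matrix.of (fun i j => z (i, j)) * (hR.1.eigenvectorUnitary : Matrix n n ℂ)ᴴ) *
    (hR.1.eigenvectorUnitary : Matrix n n ℂ)) p.1 p.2 = z p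
  generalize (hL.1.eigenvectorUnitary : Matrix n n ℂ) = U at *
  generalize (hR.1.eigenvectorUnitary : Matrix n n ℂ) = W at *
  have e : ∀ D : Matrix n n ℂ, Uᴴ * (U * D * Wᴴ) * W = D := by
    intro D
    calc _ = (Uᴴ * U) * D * (Wᴴ * W) := by simp only [Matrix.mul_assoc]
      _ = _ := by rw [h1, h2, Matrix.one_mul, Matrix.mul_one]
  rw [e]
  rfl

end Coord

section Abstract
variable {n m : Type*} [Fintype n] [DecidableEq n] [Fintype m] [DecidableEq m]
variable {L R : Matrix n n ℂ} {L0 R0 : Matrix m m ℂ}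

/-- The resolvent defect `F(s)` for a pair of vectors. -/
noncomputable def defectF (hL : L.PosDef) (hR : R.PosDef) (hL0 : L0.PosDef) (hR0 : R0.PosDef)
    (η : Matrix n n ℂ) (ξ : Matrix m m ℂ) (s : ℝ) : ℝ :=
  ∑ p : n × n, Complex.normSq (coordM hL hR η p) /
      (hL.1.eigenvalues p.1 / hR.1.eigenvalues p.2 + s)
    - ∑ p : m × m, Complex.normSq (coordM hL0 hR0 ξ p) /
      (hL0.1.eigenvalues p.1 / hR0.1.eigenvalues p.2 + s)

/-- operator version of `core_fun` -/
theorem op_fun (hL : L.PosDef) (hR : R.PosDef) (hL0 : L0.PosDef) (hR0 : R0.PosDef)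
    (V : Matrix m m ℂ →ₗ[ℂ] Matrix n n ℂ)
    (h1 : ∀ Z, ((V Z)ᴴ * V Z).trace = (Zᴴ * Z).trace)
    (h2 : ∀ Z, ((V Z)ᴴ * (L * V Z * mpow R (-1))).trace = (Zᴴ * (L0 * Z * mpow R0 (-1))).trace)
    (ξ : Matrix m m ℂ) (hF : ∀ s, 0 < s → defectF hL hR hL0 hR0 (V ξ) ξ s = 0) (w : ℝ) :
    V (mpow L0 w * ξ * mpow R0 (-w)) = mpow L w * V ξ * mpow R (-w) := by
  apply coord_inj hL hR
  have h := core_fun (coordM hL hR ∘ₗ V ∘ₗ uncoordM hL0 hR0)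
    (fun p : m × m => hL0.1.eigenvalues p.1 / hR0.1.eigenvalues p.2)
    (fun p : n × n => hL.1.eigenvalues p.1 / hR.1.eigenvalues p.2)
    (fun p => div_pos (hL0.eigenvalues_pos _) (hR0.eigenvalues_pos _))
    (fun p => div_pos (hL.eigenvalues_pos _) (hR.eigenvalues_pos _))
    (by
      intro z
      simp only [LinearMap.comp_apply]
      rw [coord_norm, h1, ← coord_norm hL0 hR0, coord_uncoord])
    (by
      intro z
      simp only [LinearMap.comp_apply]
      have q1 := coord_quad hL hR (V (uncoordM hL0 hR0 z)) 1
      have q2 := coord_quad hL0 hR0 (uncoordM hL0 hR0 z) 1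
      simp only [Real.rpow_one, mpow_one' hL, mpow_one' hL0] at q1 q2
      rw [q1, h2, ← q2, coord_uncoord])
    (coordM hL0 hR0 ξ)
    (by
      intro s hs
      simp only [LinearMap.comp_apply, uncoord_coord]
      exact hF s hs) (fun x => x ^ w)
  ext p
  have hp := h p
  simp only [LinearMap.comp_apply, uncoord_coord] at hp
  rw [coord_mpow, ← hp]
  have e : (fun i : m × m => coordM hL0 hR0 ξ i *
      (((hL0.1.eigenvalues i.1 / hR0.1.eigenvalues i.2) ^ w : ℝ) : ℂ))
      = coordM hL0 hR0 (mpow L0 w * ξ * mpow R0 (-w)) := by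
    ext i; rw [coord_mpow]
  rw [e, uncoord_coord]

theorem op_nonneg (hL : L.PosDef) (hR : R.PosDef) (hL0 : L0.PosDef) (hR0 : R0.PosDef)
    (V : Matrix m m ℂ →ₗ[ℂ] Matrix n n ℂ)
    (h1 : ∀ Z, ((V Z)ᴴ * V Z).trace = (Zᴴ * Z).trace)
    (h2 : ∀ Z, ((V Z)ᴴ * (L * V Z * mpow R (-1))).trace = (Zᴴ * (L0 * Z * mpow R0 (-1))).trace)
    (ξ : Matrix m m ℂ) (s : ℝ) (hs : 0 < s) : 0 ≤ defectF hL hR hL0 hR0 (V ξ) ξ s := by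
  have h := core_nonneg (coordM hL hR ∘ₗ V ∘ₗ uncoordM hL0 hR0)
    (fun p : m × m => hL0.1.eigenvalues p.1 / hR0.1.eigenvalues p.2)
    (fun p : n × n => hL.1.eigenvalues p.1 / hR.1.eigenvalues p.2)
    (fun p => div_pos (hL0.eigenvalues_pos _) (hR0.eigenvalues_pos _))
    (fun p => div_pos (hL.eigenvalues_pos _) (hR.eigenvalues_pos _))
    (by
      intro z
      simp only [LinearMap.comp_apply]
      rw [coord_norm, h1, ← coord_norm hL0 hR0, coord_uncoord])
    (by
      intro z
      simp only [LinearMap.comp_apply]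
      have q1 := coord_quad hL hR (V (uncoordM hL0 hR0 z)) 1
      have q2 := coord_quad hL0 hR0 (uncoordM hL0 hR0 z) 1
      simp only [Real.rpow_one, mpow_one' hL, mpow_one' hL0] at q1 q2
      rw [q1, h2, ← q2, coord_uncoord])
    (coordM hL0 hR0 ξ) s hs
  simp only [LinearMap.comp_apply, uncoord_coord] at h
  exact h

theorem op_nonpos (hL : L.PosDef) (hR : R.PosDef) (hL0 : L0.PosDef) (hR0 : R0.PosDef)
    (V : Matrix m m ℂ →ₗ[ℂ] Matrix n n ℂ)
    (h1 : ∀ Z, ((V Z)ᴴ * V Z).trace = (Zᴴ * Z).trace)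
    (h2 : ∀ Z, ((V Z)ᴴ * (mpow L (-1) * V Z * R)).trace = (Zᴴ * (mpow L0 (-1) * Z * R0)).trace)
    (ξ : Matrix m m ℂ) (s : ℝ) (hs : 0 < s) : defectF hL hR hL0 hR0 (V ξ) ξ s ≤ 0 := by
  have h := core_nonpos (coordM hL hR ∘ₗ V ∘ₗ uncoordM hL0 hR0)
    (fun p : m × m => hL0.1.eigenvalues p.1 / hR0.1.eigenvalues p.2)
    (fun p : n × n => hL.1.eigenvalues p.1 / hR.1.eigenvalues p.2)
    (fun p => div_pos (hL0.eigenvalues_pos _) (hR0.eigenvalues_pos _))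
    (fun p => div_pos (hL.eigenvalues_pos _) (hR.eigenvalues_pos _))
    (by
      intro z
      simp only [LinearMap.comp_apply]
      rw [coord_norm, h1, ← coord_norm hL0 hR0, coord_uncoord])
    (by
      intro z
      simp only [LinearMap.comp_apply]
      have q1 := coord_quad hL hR (V (uncoordM hL0 hR0 z)) (-1)
      have q2 := coord_quad hL0 hR0 (uncoordM hL0 hR0 z) (-1)
      simp only [Real.rpow_neg_one, neg_neg, mpow_one' hR, mpow_one' hR0] at q1 q2
      rw [q1, h2, ← q2, coord_uncoord])
    (coordM hL0 hR0 ξ) s hs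
  simp only [LinearMap.comp_apply, uncoord_coord] at h
  exact h

theorem op_zero_pos (hL : L.PosDef) (hR : R.PosDef) (hL0 : L0.PosDef) (hR0 : R0.PosDef)
    (η : Matrix n n ℂ) (ξ : Matrix m m ℂ) (hn : (ηᴴ * η).trace = (ξᴴ * ξ).trace)
    (hF : ∀ s, 0 < s → 0 ≤ defectF hL hR hL0 hR0 η ξ s)
    (p : ℝ) (hp : p ∈ Set.Ioo (0:ℝ) 1)
    (h : (ξᴴ * (mpow L0 p * ξ * mpow R0 (-p))).trace.re ≤
      (ηᴴ * (mpow L p * η * mpow R (-p))).trace.re) :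
    ∀ s, 0 < s → defectF hL hR hL0 hR0 η ξ s = 0 := by
  rw [← coord_quad hL0 hR0, ← coord_quad hL hR] at h
  refine core_int_pos _ _ _ _
    (fun p => div_pos (hL0.eigenvalues_pos _) (hR0.eigenvalues_pos _))
    (fun p => div_pos (hL.eigenvalues_pos _) (hR.eigenvalues_pos _)) ?_ hF p hp ?_
  · rw [coord_norm, coord_norm, hn]
  · refine le_trans (le_of_eq (Finset.sum_congr rfl fun _ _ => mul_comm _ _)) (h.trans (le_of_eq (Finset.sum_congr rfl fun _ _ => mul_comm _ _)))

theorem op_zero_neg (hL : L.PosDef) (hR : R.PosDef) (hL0 : L0.PosDef) (hR0 : R0.PosDef)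
    (η : Matrix n n ℂ) (ξ : Matrix m m ℂ)
    (hF : ∀ s, 0 < s → 0 ≤ defectF hL hR hL0 hR0 η ξ s)
    (p : ℝ) (hp : p ∈ Set.Ioo (-1:ℝ) 0)
    (h : (ηᴴ * (mpow L p * η * mpow R (-p))).trace.re ≤
      (ξᴴ * (mpow L0 p * ξ * mpow R0 (-p))).trace.re) :
    ∀ s, 0 < s → defectF hL hR hL0 hR0 η ξ s = 0 := by
  rw [← coord_quad hL hR, ← coord_quad hL0 hR0] at h
  refine core_int_neg _ _ _ _
    (fun p => div_pos (hL0.eigenvalues_pos _) (hR0.eigenvalues_pos _))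
    (fun p => div_pos (hL.eigenvalues_pos _) (hR.eigenvalues_pos _)) hF p hp ?_
  refine le_trans (le_of_eq (Finset.sum_congr rfl fun _ _ => mul_comm _ _)) (h.trans (le_of_eq (Finset.sum_congr rfl fun _ _ => mul_comm _ _)))

end Abstract

section Hom
variable {n m : Type*} [Fintype n] [DecidableEq n] [Fintype m] [DecidableEq m]
variable {L R : Matrix n n ℂ} {L0 R0 : Matrix m m ℂ}

theorem mpow_add_assoc {A : Matrix n n ℂ} (hA : A.PosDef) (s t : ℝ) (Z : Matrix n n ℂ) :
    mpow A s * (mpow A t * Z) = mpow A (s + t) * Z := by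
  rw [← Matrix.mul_assoc, mpow_add hA]

theorem map_ct (φ : Matrix m m ℂ →⋆ₐ[ℂ] Matrix n n ℂ) (Z : Matrix m m ℂ) :
    (φ Z)ᴴ = φ Zᴴ := by
  rw [← Matrix.star_eq_conjTranspose, ← map_star, Matrix.star_eq_conjTranspose]

/-- the isometry `Z ↦ φ(Z R0^{-1/2}) R^{1/2}` -/
noncomputable def isoV (φ : Matrix m m ℂ →⋆ₐ[ℂ] Matrix n n ℂ) (R : Matrix n n ℂ)
    (R0 : Matrix m m ℂ) : Matrix m m ℂ →ₗ[ℂ] Matrix n n ℂ where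
  toFun Z := φ (Z * mpow R0 (-(1/2))) * mpow R (1/2)
  map_add' Y Z := by simp [Matrix.add_mul]
  map_smul' c Y := by simp

theorem isoV_apply (φ : Matrix m m ℂ →⋆ₐ[ℂ] Matrix n n ℂ) (R : Matrix n n ℂ)
    (R0 : Matrix m m ℂ) (Z : Matrix m m ℂ) :
    isoV φ R R0 Z = φ (Z * mpow R0 (-(1/2))) * mpow R (1/2) := rfl

theorem isoV_h1 (φ : Matrix m m ℂ →⋆ₐ[ℂ] Matrix n n ℂ) (hR : R.PosDef) (hR0 : R0.PosDef)
    (tR : ∀ Z, (R * φ Z).trace = (R0 * Z).trace) (Z : Matrix m m ℂ) :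
    ((isoV φ R R0 Z)ᴴ * isoV φ R R0 Z).trace = (Zᴴ * Z).trace := by
  rw [isoV_apply]
  obtain ⟨Y, hY⟩ : ∃ Y, Y = Z * mpow R0 (-(1/2)) := ⟨_, rfl⟩
  rw [← hY]
  have hZ : Y * mpow R0 (1/2) = Z := by
    rw [hY, Matrix.mul_assoc, mpow_cancel' hR0, Matrix.mul_one]
  calc _ = (mpow R (1/2) * ((φ Y)ᴴ * (φ Y * mpow R (1/2)))).trace := by
        rw [Matrix.conjTranspose_mul, mpow_herm hR]; simp only [Matrix.mul_assoc]
    _ = ((φ Y)ᴴ * (φ Y * (mpow R (1/2) * mpow R (1/2)))).trace := by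
        rw [Matrix.trace_mul_comm]; simp only [Matrix.mul_assoc]
    _ = (R * φ (Yᴴ * Y)).trace := by
        rw [mpow_sq hR, ← Matrix.mul_assoc, Matrix.trace_mul_comm, map_ct, map_mul]
    _ = (Yᴴ * (Y * (mpow R0 (1/2) * mpow R0 (1/2)))).trace := by
        rw [tR, mpow_sq hR0, Matrix.trace_mul_comm]; simp only [Matrix.mul_assoc]
    _ = (mpow R0 (1/2) * (Yᴴ * (Y * mpow R0 (1/2)))).trace := by
        rw [Matrix.trace_mul_comm (mpow R0 (1/2))]; simp only [Matrix.mul_assoc]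
    _ = _ := by
        rw [← hZ, Matrix.conjTranspose_mul, mpow_herm hR0]; simp only [Matrix.mul_assoc]

theorem isoV_h2 (φ : Matrix m m ℂ →⋆ₐ[ℂ] Matrix n n ℂ) (hR : R.PosDef) (hR0 : R0.PosDef)
    (tL : ∀ Z, (L * φ Z).trace = (L0 * Z).trace) (Z : Matrix m m ℂ) :
    ((isoV φ R R0 Z)ᴴ * (L * isoV φ R R0 Z * mpow R (-1))).trace
      = (Zᴴ * (L0 * Z * mpow R0 (-1))).trace := by
  rw [isoV_apply]
  obtain ⟨Y, hY⟩ : ∃ Y, Y = Z * mpow R0 (-(1/2)) := ⟨_, rfl⟩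
  rw [← hY]
  have e : mpow R (1/2) * (mpow R (-1) * mpow R (1/2)) = 1 := by
    rw [mpow_add hR, mpow_add hR]; norm_num; rw [mpow_zero' hR]
  have e0 : mpow R0 (-(1/2)) * mpow R0 (-(1/2)) = mpow R0 (-1) := by
    rw [mpow_add hR0]; norm_num
  calc _ = (mpow R (1/2) * ((φ Y)ᴴ * (L * (φ Y * (mpow R (1/2) * mpow R (-1)))))).trace := by
        rw [Matrix.conjTranspose_mul, mpow_herm hR]; simp only [Matrix.mul_assoc]
    _ = ((φ Y)ᴴ * (L * (φ Y * (mpow R (1/2) * (mpow R (-1) * mpow R (1/2)))))).trace := by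
        rw [Matrix.trace_mul_comm]; simp only [Matrix.mul_assoc]
    _ = (L * φ (Y * Yᴴ)).trace := by
        rw [e, Matrix.mul_one, Matrix.trace_mul_comm, map_ct, Matrix.mul_assoc, map_mul]
    _ = (L0 * (Z * (mpow R0 (-1) * Zᴴ))).trace := by
        rw [tL, hY, Matrix.conjTranspose_mul, mpow_herm hR0, ← e0]; simp only [Matrix.mul_assoc]
    _ = _ := by
        rw [Matrix.trace_mul_comm Zᴴ]; simp only [Matrix.mul_assoc]

theorem conv_final (φ : Matrix m m ℂ →⋆ₐ[ℂ] Matrix n n ℂ)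
    (hL : L.PosDef) (hR : R.PosDef) (hL0 : L0.PosDef) (hR0 : R0.PosDef)
    (tR : ∀ Z, (R * φ Z).trace = (R0 * Z).trace)
    (tL : ∀ Z, (L * φ Z).trace = (L0 * Z).trace) (X : Matrix m m ℂ)
    (hF : ∀ s, 0 < s → defectF hL hR hL0 hR0 (φ X * mpow R (1/2)) (X * mpow R0 (1/2)) s = 0)
    (w : ℝ) : φ (mpow L0 w * X * mpow R0 (-w)) = mpow L w * φ X * mpow R (-w) := by
  have eV : isoV φ R R0 (X * mpow R0 (1/2)) = φ X * mpow R (1/2) := by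
    rw [isoV_apply, Matrix.mul_assoc, mpow_cancel hR0, Matrix.mul_one]
  have h := op_fun hL hR hL0 hR0 (isoV φ R R0) (isoV_h1 φ hR hR0 tR) (isoV_h2 φ hR hR0 tL)
    (X * mpow R0 (1/2)) (by rw [eV]; exact hF) w
  rw [eV, isoV_apply] at h
  have h' := congrArg (· * mpow R (-(1/2))) h
  simp only [Matrix.mul_assoc] at h' ⊢
  rw [mpow_cancel hR, Matrix.mul_one] at h'
  simp only [mpow_add hR, mpow_add hR0] at h'
  convert h' using 4
  · congr 2; ring
  · congr 1; ring

theorem conv_nonneg (φ : Matrix m m ℂ →⋆ₐ[ℂ] Matrix n n ℂ)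
    (hL : L.PosDef) (hR : R.PosDef) (hL0 : L0.PosDef) (hR0 : R0.PosDef)
    (tR : ∀ Z, (R * φ Z).trace = (R0 * Z).trace)
    (tL : ∀ Z, (L * φ Z).trace = (L0 * Z).trace) (X : Matrix m m ℂ) (s : ℝ) (hs : 0 < s) :
    0 ≤ defectF hL hR hL0 hR0 (φ X * mpow R (1/2)) (X * mpow R0 (1/2)) s := by
  have eV : isoV φ R R0 (X * mpow R0 (1/2)) = φ X * mpow R (1/2) := by
    rw [isoV_apply, Matrix.mul_assoc, mpow_cancel hR0, Matrix.mul_one]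
  rw [← eV]
  exact op_nonneg hL hR hL0 hR0 (isoV φ R R0) (isoV_h1 φ hR hR0 tR) (isoV_h2 φ hR hR0 tL) _ s hs

theorem quad_half (hR : R.PosDef) (K : Matrix n n ℂ) (L : Matrix n n ℂ) (p : ℝ) :
    ((K * mpow R (1/2))ᴴ * (mpow L p * (K * mpow R (1/2)) * mpow R (-p))).trace
      = (mpow R (1 - p) * Kᴴ * mpow L p * K).trace := by
  rw [Matrix.conjTranspose_mul, mpow_herm hR]
  calc _ = (mpow R (1/2) * (Kᴴ * (mpow L p * (K * (mpow R (1/2) * mpow R (-p)))))).trace := by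
        simp only [Matrix.mul_assoc]
    _ = ((Kᴴ * mpow L p * K) * (mpow R (1/2) * (mpow R (-p) * mpow R (1/2)))).trace := by
        rw [Matrix.trace_mul_comm]; simp only [Matrix.mul_assoc]
    _ = _ := by
        rw [mpow_add hR, mpow_add hR, Matrix.trace_mul_comm]
        simp only [Matrix.mul_assoc]
        congr 3; ring

/-- equality case of the monotonicity inequality, in both ranges of `p` -/
theorem conv_main (φ : Matrix m m ℂ →⋆ₐ[ℂ] Matrix n n ℂ)
    (hL : L.PosDef) (hR : R.PosDef) (hL0 : L0.PosDef) (hR0 : R0.PosDef)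
    (tR : ∀ Z, (R * φ Z).trace = (R0 * Z).trace)
    (tL : ∀ Z, (L * φ Z).trace = (L0 * Z).trace) (hR1 : R.trace = 1) (t : ℝ)
    (hQ : (0 < 2 * t ∧ 2 * t < 1 ∧ 1 ≤ (mpow R (1 - 2 * t) * φ (mpow R0 t * mpow L0 (-t)) *
        mpow L (2 * t) * φ (mpow L0 (-t) * mpow R0 t)).trace.re) ∨
      (-1 < 2 * t ∧ 2 * t < 0 ∧ (mpow R (1 - 2 * t) * φ (mpow R0 t * mpow L0 (-t)) *
        mpow L (2 * t) * φ (mpow L0 (-t) * mpow R0 t)).trace.re ≤ 1))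
    (w : ℝ) : mpow R w = mpow L w * mpow (φ L0) (-w) * mpow (φ R0) w := by
  have hφL := map_posDef φ hL0
  have hφR := map_posDef φ hR0
  have hR01 : R0.trace = 1 := by
    have := tR 1
    rwa [map_one, Matrix.mul_one, Matrix.mul_one, hR1, eq_comm] at this
  set X := mpow L0 (-t) * mpow R0 t with hX
  have hXH : Xᴴ = mpow R0 t * mpow L0 (-t) := by
    rw [hX, Matrix.conjTranspose_mul, mpow_herm hL0, mpow_herm hR0]
  have q1 := quad_half hR (φ X) L (2 * t)
  rw [map_ct, hXH] at q1
  have q2 := quad_half hR0 X L0 (2 * t)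
  have q3 : (mpow R0 (1 - 2 * t) * Xᴴ * mpow L0 (2 * t) * X) = mpow R0 1 := by
    rw [hXH, hX]
    simp only [Matrix.mul_assoc, mpow_add_assoc hL0, mpow_add_assoc hR0]
    rw [show -t + (2 * t + -t) = 0 by ring, mpow_zero' hL0, Matrix.one_mul, mpow_add hR0]
    congr 1; ring
  rw [q3, mpow_one' hR0, hR01] at q2
  have hn : ((φ X * mpow R (1/2))ᴴ * (φ X * mpow R (1/2))).trace
      = ((X * mpow R0 (1/2))ᴴ * (X * mpow R0 (1/2))).trace := by
    have := isoV_h1 φ hR hR0 tR (X * mpow R0 (1/2))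
    rwa [isoV_apply, Matrix.mul_assoc, mpow_cancel hR0, Matrix.mul_one] at this
  have hF : ∀ s, 0 < s →
      defectF hL hR hL0 hR0 (φ X * mpow R (1/2)) (X * mpow R0 (1/2)) s = 0 := by
    rcases hQ with ⟨h1, h2, h3⟩ | ⟨h1, h2, h3⟩
    · refine op_zero_pos hL hR hL0 hR0 _ _ hn
        (conv_nonneg φ hL hR hL0 hR0 tR tL X) (2 * t) ⟨h1, h2⟩ ?_
      rw [q1, q2]; simpa using h3
    · refine op_zero_neg hL hR hL0 hR0 _ _
        (conv_nonneg φ hL hR hL0 hR0 tR tL X) (2 * t) ⟨h1, h2⟩ ?_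
      rw [q1, q2]; simpa using h3
  have key := conv_final φ hL hR hL0 hR0 tR tL X hF
  simp only [hX, map_mul, map_mpow φ hL0 hφL, map_mpow φ hR0 hφR] at key
  -- the case `w = t` gives `ρ^t`
  have kt : mpow L t * mpow (φ L0) (-t) * mpow (φ R0) t = mpow R t := by
    have := congrArg (· * mpow R t) (key t)
    simp only [Matrix.mul_assoc, mpow_add_assoc hφL, mpow_add hφR, mpow_cancel' hR,
      Matrix.mul_one] at this
    rw [add_neg_cancel, mpow_zero' hφL, mpow_zero' hφR, Matrix.one_mul, Matrix.one_mul] at this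
    rw [Matrix.mul_assoc, ← this]
  have kt2 : mpow (φ L0) (-t) * mpow (φ R0) t = mpow L (-t) * mpow R t := by
    rw [← kt]
    simp only [Matrix.mul_assoc, mpow_add_assoc hL]
    rw [neg_add_cancel, mpow_zero' hL, Matrix.one_mul]
  have kw := key (t - w)
  rw [Matrix.mul_assoc, Matrix.mul_assoc, mpow_add_assoc hφL, mpow_add hφR, kt2,
    Matrix.mul_assoc, Matrix.mul_assoc, mpow_add_assoc hL, mpow_add hR] at kw
  rw [show t - w + -t = -w by ring, show t + -(t - w) = w by ring] at kw
  rw [Matrix.mul_assoc, kw, mpow_add_assoc hL, add_neg_cancel, mpow_zero' hL, Matrix.one_mul]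

end Hom

section Fwd
variable {n m : Type*} [Fintype n] [DecidableEq n] [Fintype m] [DecidableEq m]
variable {L R : Matrix n n ℂ} {L0 R0 : Matrix m m ℂ}

/-- the isometry `Z ↦ M φ(Z) U` -/
noncomputable def isoJ (φ : Matrix m m ℂ →⋆ₐ[ℂ] Matrix n n ℂ) (M U : Matrix n n ℂ) :
    Matrix m m ℂ →ₗ[ℂ] Matrix n n ℂ where
  toFun Z := M * (φ Z * U)
  map_add' Y Z := by simp [Matrix.add_mul, Matrix.mul_add]
  map_smul' c Y := by simp

theorem isoJ_apply (φ : Matrix m m ℂ →⋆ₐ[ℂ] Matrix n n ℂ) (M U : Matrix n n ℂ)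
    (Z : Matrix m m ℂ) : isoJ φ M U Z = M * (φ Z * U) := rfl

theorem fwd_main (φ : Matrix m m ℂ →⋆ₐ[ℂ] Matrix n n ℂ)
    (hL : L.PosDef) (hR : R.PosDef) (hL0 : L0.PosDef) (hR0 : R0.PosDef)
    (tR : ∀ Z, (R * φ Z).trace = (R0 * Z).trace)
    (tL : ∀ Z, (L * φ Z).trace = (L0 * Z).trace)
    (hMk : R = mpow L (1/2) * mpow (φ L0) (-(1/2)) * φ R0 * mpow (φ L0) (-(1/2)) * mpow L (1/2))
    (w : ℝ) : mpow R w = mpow L w * mpow (φ L0) (-w) * mpow (φ R0) w := by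
  have hφL := map_posDef φ hL0
  have hφR := map_posDef φ hR0
  obtain ⟨M, hM⟩ : ∃ M, M = mpow L (1/2) * mpow (φ L0) (-(1/2)) := ⟨_, rfl⟩
  have hMH : Mᴴ = mpow (φ L0) (-(1/2)) * mpow L (1/2) := by
    rw [hM, Matrix.conjTranspose_mul, mpow_herm hL, mpow_herm hφL]
  have hMM : Mᴴ * M = φ (mpow L0 (-(1/2))) * L * φ (mpow L0 (-(1/2))) := by
    rw [hMH, hM, map_mpow φ hL0 hφL]
    conv_rhs => rw [← mpow_sq hL]
    simp only [Matrix.mul_assoc]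
  have tM : ∀ W, (Mᴴ * M * φ W).trace = W.trace := by
    intro W
    calc _ = (φ (mpow L0 (-(1/2))) * (L * (φ (mpow L0 (-(1/2))) * φ W))).trace := by
          rw [hMM]; simp only [Matrix.mul_assoc]
      _ = (L * φ (mpow L0 (-(1/2)) * (W * mpow L0 (-(1/2))))).trace := by
          rw [Matrix.trace_mul_comm, map_mul, map_mul]; simp only [Matrix.mul_assoc]
      _ = (L0 * (mpow L0 (-(1/2)) * (W * mpow L0 (-(1/2))))).trace := tL _
      _ = (mpow L0 1 * (mpow L0 (-(1/2)) * (W * mpow L0 (-(1/2))))).trace := by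
          rw [mpow_one' hL0]
      _ = (W * (mpow L0 (-(1/2)) * mpow L0 (1 + -(1/2)))).trace := by
          rw [mpow_add_assoc hL0, Matrix.trace_mul_comm]; simp only [Matrix.mul_assoc]
      _ = W.trace := by
          rw [mpow_add hL0, show (-(1/2) + (1 + -(1/2)) : ℝ) = 0 by norm_num, mpow_zero' hL0,
            Matrix.mul_one]
  have hMLM : Mᴴ * (mpow L (-1) * M) = φ (mpow L0 (-1)) := by
    rw [hMH, hM, map_mpow φ hL0 hφL]
    simp only [Matrix.mul_assoc, mpow_add_assoc hL]
    rw [show (1/2 + (-1 + 1/2) : ℝ) = 0 by norm_num, mpow_zero' hL, Matrix.one_mul, mpow_add hφL]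
    norm_num
  obtain ⟨G, hG⟩ : ∃ G, G = mpow (φ R0) (1/2) * Mᴴ := ⟨_, rfl⟩
  have hGH : Gᴴ = M * mpow (φ R0) (1/2) := by
    rw [hG, Matrix.conjTranspose_mul, mpow_herm hφR, Matrix.conjTranspose_conjTranspose]
  have hGG : Gᴴ * G = R := by
    calc Gᴴ * G = M * (mpow (φ R0) (1/2) * mpow (φ R0) (1/2)) * Mᴴ := by
          rw [hGH, hG]; simp only [Matrix.mul_assoc]
      _ = R := by
          rw [mpow_sq hφR, hM, ← hM, hMH, hMk, hM]; simp only [Matrix.mul_assoc]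
  obtain ⟨U, hU⟩ : ∃ U, U = G * mpow R (-(1/2)) := ⟨_, rfl⟩
  have hUH : Uᴴ = mpow R (-(1/2)) * Gᴴ := by
    rw [hU, Matrix.conjTranspose_mul, mpow_herm hR]
  have hUU : Uᴴ * U = 1 := by
    calc Uᴴ * U = mpow R (-(1/2)) * ((Gᴴ * G) * mpow R (-(1/2))) := by
          rw [hUH, hU]; simp only [Matrix.mul_assoc]
      _ = mpow R (-(1/2)) * (mpow R 1 * mpow R (-(1/2))) := by rw [hGG, mpow_one' hR]
      _ = 1 := by
          rw [mpow_add hR, mpow_add hR, show (-(1/2) + (1 + -(1/2)) : ℝ) = 0 by norm_num,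
            mpow_zero' hR]
  have hUU' : U * Uᴴ = 1 := mul_eq_one_comm.mp hUU
  have hURU : U * (R * Uᴴ) = φ (mpow R0 (1/2)) * (Mᴴ * M) * φ (mpow R0 (1/2)) := by
    calc U * (R * Uᴴ) = U * (mpow R 1 * Uᴴ) := by rw [mpow_one' hR]
      _ = G * Gᴴ := by
          rw [hUH, hU]
          simp only [Matrix.mul_assoc, mpow_add_assoc hR]
          rw [show (-(1/2) + (1 + -(1/2)) : ℝ) = 0 by norm_num, mpow_zero' hR, Matrix.one_mul]
      _ = _ := by
          rw [hGH, hG, map_mpow φ hR0 hφR]; simp only [Matrix.mul_assoc]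
  have j1 : ∀ Z, ((isoJ φ M U Z)ᴴ * isoJ φ M U Z).trace = (Zᴴ * Z).trace := by
    intro Z
    calc _ = (Uᴴ * (φ Zᴴ * (Mᴴ * (M * (φ Z * U))))).trace := by
          rw [isoJ_apply, Matrix.conjTranspose_mul, Matrix.conjTranspose_mul, map_ct]
          simp only [Matrix.mul_assoc]
      _ = (φ Zᴴ * (Mᴴ * (M * (φ Z * (U * Uᴴ))))).trace := by
          rw [Matrix.trace_mul_comm]; simp only [Matrix.mul_assoc]
      _ = (Mᴴ * M * φ (Z * Zᴴ)).trace := by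
          rw [hUU', Matrix.mul_one, Matrix.trace_mul_comm, map_mul]; simp only [Matrix.mul_assoc]
      _ = _ := by rw [tM, Matrix.trace_mul_comm]
  have j2 : ∀ Z, ((isoJ φ M U Z)ᴴ * (mpow L (-1) * isoJ φ M U Z * R)).trace
      = (Zᴴ * (mpow L0 (-1) * Z * R0)).trace := by
    intro Z
    calc _ = (Uᴴ * (φ Zᴴ * ((Mᴴ * (mpow L (-1) * M)) * (φ Z * (U * R))))).trace := by
          rw [isoJ_apply, Matrix.conjTranspose_mul, Matrix.conjTranspose_mul, map_ct]
          simp only [Matrix.mul_assoc]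
      _ = (φ Zᴴ * (φ (mpow L0 (-1)) * (φ Z * (U * (R * Uᴴ))))).trace := by
          rw [Matrix.trace_mul_comm, hMLM]; simp only [Matrix.mul_assoc]
      _ = ((φ Zᴴ * (φ (mpow L0 (-1)) * (φ Z * φ (mpow R0 (1/2))))) *
            ((Mᴴ * M) * φ (mpow R0 (1/2)))).trace := by
          rw [hURU]; simp only [Matrix.mul_assoc]
      _ = ((Mᴴ * M) * φ (mpow R0 (1/2) * (Zᴴ * (mpow L0 (-1) * (Z * mpow R0 (1/2)))))).trace := by
          rw [Matrix.trace_mul_comm]; simp only [map_mul, Matrix.mul_assoc]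
      _ = (Zᴴ * (mpow L0 (-1) * Z * (mpow R0 (1/2) * mpow R0 (1/2)))).trace := by
          rw [tM, Matrix.trace_mul_comm]; simp only [Matrix.mul_assoc]
      _ = _ := by rw [mpow_sq hR0]
  have hJ : isoJ φ M U (mpow R0 (1/2)) = mpow R (1/2) := by
    calc _ = (Gᴴ * G) * mpow R (-(1/2)) := by
          rw [isoJ_apply, map_mpow φ hR0 hφR, hGH, hU]; simp only [Matrix.mul_assoc]
      _ = mpow R 1 * mpow R (-(1/2)) := by rw [hGG, mpow_one' hR]
      _ = _ := by rw [mpow_add hR]; norm_num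
  have hF : ∀ s, 0 < s →
      defectF hL hR hL0 hR0 (φ 1 * mpow R (1/2)) (1 * mpow R0 (1/2)) s = 0 := by
    intro s hs
    refine le_antisymm ?_ (conv_nonneg φ hL hR hL0 hR0 tR tL 1 s hs)
    have := op_nonpos hL hR hL0 hR0 (isoJ φ M U) j1 j2 (mpow R0 (1/2)) s hs
    rw [hJ] at this
    rw [map_one, Matrix.one_mul, Matrix.one_mul]
    exact this
  have key := conv_final φ hL hR hL0 hR0 tR tL 1 hF (-w)
  simp only [map_mul, map_mpow φ hL0 hφL, map_mpow φ hR0 hφR, map_one, Matrix.mul_one,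
    neg_neg] at key
  rw [Matrix.mul_assoc, key, mpow_add_assoc hL, add_neg_cancel, mpow_zero' hL, Matrix.one_mul]

end Fwd

section Conc
variable {dA dB dC : ℕ}

/-- `Z ↦ Z ⊗ I_B` -/
noncomputable def homAC (dA dB dC : ℕ) : Matrix (Fin dA × Fin dC) (Fin dA × Fin dC) ℂ →⋆ₐ[ℂ]
    Matrix (Fin dA × Fin dB × Fin dC) (Fin dA × Fin dB × Fin dC) ℂ :=
  { AlgHom.ofLinearMap
      ({ toFun := fun Z => Matrix.of fun x y => (if x.2.1 = y.2.1 then (1:ℂ) else 0) *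
          Z (x.1, x.2.2) (y.1, y.2.2)
         map_add' := by intro Y Z; ext x y; simp [mul_add]
         map_smul' := by intro c Z; ext x y; simp } :
        Matrix (Fin dA × Fin dC) (Fin dA × Fin dC) ℂ →ₗ[ℂ]
          Matrix (Fin dA × Fin dB × Fin dC) (Fin dA × Fin dB × Fin dC) ℂ)
      (by
        ext ⟨a, b, c⟩ ⟨a', b', c'⟩
        simp only [LinearMap.coe_mk, AddHom.coe_mk, Matrix.of_apply, Matrix.one_apply, Prod.mk.injEq]
        by_cases h1 : a = a' <;> by_cases h2 : b = b' <;> by_cases h3 : c = c' <;> simp [h1, h2, h3])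
      (by
        intro Y Z
        ext ⟨a, b, c⟩ ⟨a', b', c'⟩
        simp only [LinearMap.coe_mk, AddHom.coe_mk, Matrix.of_apply, Matrix.mul_apply, Fintype.sum_prod_type]
        rw [Finset.mul_sum]
        refine Finset.sum_congr rfl fun i _ => ?_
        rw [Finset.sum_eq_single b]
        · simp [Finset.mul_sum, mul_left_comm]
        · intro j _ hj; simp [hj.symm]
        · simp) with
    map_star' := by
      intro Z
      ext ⟨a, b, c⟩ ⟨a', b', c'⟩
      change (if b = b' then (1:ℂ) else 0) * star (Z (a', c') (a, c))
        = star ((if b' = b then (1:ℂ) else 0) * Z (a', c') (a, c))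
      by_cases h : b = b'
      · simp [h]
      · simp [h, Ne.symm h] }

theorem homAC_apply (Z : Matrix (Fin dA × Fin dC) (Fin dA × Fin dC) ℂ)
    (x y : Fin dA × Fin dB × Fin dC) : homAC dA dB dC Z x y =
      (if x.2.1 = y.2.1 then (1:ℂ) else 0) * Z (x.1, x.2.2) (y.1, y.2.2) := rfl

/-- `Z ↦ I_A ⊗ Z` -/
noncomputable def homBC (dA dB dC : ℕ) : Matrix (Fin dB × Fin dC) (Fin dB × Fin dC) ℂ →⋆ₐ[ℂ]
    Matrix (Fin dA × Fin dB × Fin dC) (Fin dA × Fin dB × Fin dC) ℂ :=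
  { AlgHom.ofLinearMap
      ({ toFun := fun Z => Matrix.of fun x y => (if x.1 = y.1 then (1:ℂ) else 0) * Z x.2 y.2
         map_add' := by intro Y Z; ext x y; simp [mul_add]
         map_smul' := by intro c Z; ext x y; simp } :
        Matrix (Fin dB × Fin dC) (Fin dB × Fin dC) ℂ →ₗ[ℂ]
          Matrix (Fin dA × Fin dB × Fin dC) (Fin dA × Fin dB × Fin dC) ℂ)
      (by
        ext ⟨a, x⟩ ⟨a', x'⟩
        simp only [LinearMap.coe_mk, AddHom.coe_mk, Matrix.of_apply, Matrix.one_apply, Prod.mk.injEq]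
        by_cases h1 : a = a' <;> by_cases h2 : x = x' <;> simp [h1, h2])
      (by
        intro Y Z
        ext ⟨a, x⟩ ⟨a', x'⟩
        simp only [LinearMap.coe_mk, AddHom.coe_mk, Matrix.of_apply, Matrix.mul_apply]
        refine Eq.symm ((Fintype.sum_prod_type _).trans ((Finset.sum_eq_single a ?_ ?_).trans ?_))
        · intro j _ hj; simp [hj.symm]
        · simp
        · rw [Finset.mul_sum]
          refine Finset.sum_congr rfl fun i _ => ?_
          rw [if_pos rfl]; ring) with
    map_star' := by
      intro Z
      ext ⟨a, x⟩ ⟨a', x'⟩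
      change (if a = a' then (1:ℂ) else 0) * star (Z x' x)
        = star ((if a' = a then (1:ℂ) else 0) * Z x' x)
      by_cases h : a = a'
      · simp [h]
      · simp [h, Ne.symm h] }

theorem homBC_apply (Z : Matrix (Fin dB × Fin dC) (Fin dB × Fin dC) ℂ)
    (x y : Fin dA × Fin dB × Fin dC) : homBC dA dB dC Z x y =
      (if x.1 = y.1 then (1:ℂ) else 0) * Z x.2 y.2 := rfl

/-- partial trace over `B` -/
noncomputable def ptB (M : Matrix (Fin dA × Fin dB × Fin dC) (Fin dA × Fin dB × Fin dC) ℂ) :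
    Matrix (Fin dA × Fin dC) (Fin dA × Fin dC) ℂ :=
  Matrix.of fun x y => ∑ b : Fin dB, M (x.1, b, x.2) (y.1, b, y.2)

/-- partial trace over `A` -/
noncomputable def ptA (M : Matrix (Fin dA × Fin dB × Fin dC) (Fin dA × Fin dB × Fin dC) ℂ) :
    Matrix (Fin dB × Fin dC) (Fin dB × Fin dC) ℂ :=
  Matrix.of fun x y => ∑ a : Fin dA, M (a, x) (a, y)

theorem ptB_apply (M : Matrix (Fin dA × Fin dB × Fin dC) (Fin dA × Fin dB × Fin dC) ℂ)
    (x y : Fin dA × Fin dC) : ptB M x y = ∑ b : Fin dB, M (x.1, b, x.2) (y.1, b, y.2) := rfl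

theorem ptA_apply (M : Matrix (Fin dA × Fin dB × Fin dC) (Fin dA × Fin dB × Fin dC) ℂ)
    (x y : Fin dB × Fin dC) : ptA M x y = ∑ a : Fin dA, M (a, x) (a, y) := rfl

theorem redAC_apply (ρ : Matrix (Fin dA × Fin dB × Fin dC) (Fin dA × Fin dB × Fin dC) ℂ)
    (x y : Fin dA × Fin dB × Fin dC) : redAC ρ x y = (if x.2.1 = y.2.1 then (1:ℂ) else 0) *
      ∑ m : Fin dB, ρ (x.1, m, x.2.2) (y.1, m, y.2.2) := rfl

theorem redBC_apply (ρ : Matrix (Fin dA × Fin dB × Fin dC) (Fin dA × Fin dB × Fin dC) ℂ)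
    (x y : Fin dA × Fin dB × Fin dC) : redBC ρ x y = (if x.1 = y.1 then (1:ℂ) else 0) *
      ∑ m : Fin dA, ρ (m, x.2) (m, y.2) := rfl

theorem redC_apply (ρ : Matrix (Fin dA × Fin dB × Fin dC) (Fin dA × Fin dB × Fin dC) ℂ)
    (x y : Fin dA × Fin dB × Fin dC) : redC ρ x y = (if x.1 = y.1 then (1:ℂ) else 0) *
      (if x.2.1 = y.2.1 then (1:ℂ) else 0) *
      ∑ m : Fin dA, ∑ l : Fin dB, ρ (m, l, x.2.2) (m, l, y.2.2) := rfl

theorem trB (M : Matrix (Fin dA × Fin dB × Fin dC) (Fin dA × Fin dB × Fin dC) ℂ)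
    (Z : Matrix (Fin dA × Fin dC) (Fin dA × Fin dC) ℂ) :
    (M * homAC dA dB dC Z).trace = (ptB M * Z).trace := by
  simp only [Matrix.trace, Matrix.diag_apply, Matrix.mul_apply, homAC_apply, ptB_apply,
    Fintype.sum_prod_type, Finset.sum_mul]
  refine Finset.sum_congr rfl fun a _ => ?_
  rw [Finset.sum_comm]
  refine Finset.sum_congr rfl fun c _ => ?_
  rw [Finset.sum_comm]
  refine Finset.sum_congr rfl fun a' _ => ?_
  rw [Finset.sum_comm]
  conv_rhs => rw [Finset.sum_comm]
  refine Finset.sum_congr rfl fun b _ => ?_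
  rw [Finset.sum_comm]
  refine Finset.sum_congr rfl fun c' _ => ?_
  simp

theorem trA (M : Matrix (Fin dA × Fin dB × Fin dC) (Fin dA × Fin dB × Fin dC) ℂ)
    (Z : Matrix (Fin dB × Fin dC) (Fin dB × Fin dC) ℂ) :
    (M * homBC dA dB dC Z).trace = (ptA M * Z).trace := by
  simp only [Matrix.trace, Matrix.diag_apply, Matrix.mul_apply, homBC_apply, ptA_apply,
    Finset.sum_mul]
  rw [Fintype.sum_prod_type, Finset.sum_comm]
  refine Finset.sum_congr rfl fun x _ => ?_
  conv_rhs => rw [Finset.sum_comm]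
  refine Finset.sum_congr rfl fun a _ => ?_
  rw [Fintype.sum_prod_type, Finset.sum_comm]
  refine Finset.sum_congr rfl fun y _ => ?_
  simp

theorem homAC_ptB (ρ : Matrix (Fin dA × Fin dB × Fin dC) (Fin dA × Fin dB × Fin dC) ℂ) :
    homAC dA dB dC (ptB ρ) = redAC ρ := rfl

theorem homBC_ptA (ρ : Matrix (Fin dA × Fin dB × Fin dC) (Fin dA × Fin dB × Fin dC) ℂ) :
    homBC dA dB dC (ptA ρ) = redBC ρ := rfl

theorem homAC_ptB_redBC (ρ : Matrix (Fin dA × Fin dB × Fin dC) (Fin dA × Fin dB × Fin dC) ℂ) :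
    homAC dA dB dC (ptB (redBC ρ)) = redC ρ := by
  ext x y
  simp only [homAC_apply, ptB_apply, redBC_apply, redC_apply]
  simp only [Finset.mul_sum]
  refine Eq.trans Finset.sum_comm ?_
  refine Finset.sum_congr rfl fun i _ => Finset.sum_congr rfl fun j _ => ?_
  ring

theorem homBC_ptA_redAC (ρ : Matrix (Fin dA × Fin dB × Fin dC) (Fin dA × Fin dB × Fin dC) ℂ) :
    homBC dA dB dC (ptA (redAC ρ)) = redC ρ := by
  ext x y
  simp only [homBC_apply, ptA_apply, redAC_apply, redC_apply]
  simp only [Finset.mul_sum]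
  refine Finset.sum_congr rfl fun i _ => Finset.sum_congr rfl fun j _ => ?_
  ring

theorem ptB_posDef [Nonempty (Fin dB)]
    {M : Matrix (Fin dA × Fin dB × Fin dC) (Fin dA × Fin dB × Fin dC) ℂ} (hM : M.PosDef) :
    (ptB M).PosDef := by
  have e : ptB M = ∑ b : Fin dB, M.submatrix (fun x : Fin dA × Fin dC => (x.1, b, x.2))
      (fun x : Fin dA × Fin dC => (x.1, b, x.2)) := by
    ext x y; simp [ptB_apply, Matrix.sum_apply]
  rw [e]
  refine Matrix.posDef_sum Finset.univ_nonempty fun b _ => hM.submatrix ?_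
  rintro ⟨a, c⟩ ⟨a', c'⟩ h
  simpa using h

theorem ptA_posDef [Nonempty (Fin dA)]
    {M : Matrix (Fin dA × Fin dB × Fin dC) (Fin dA × Fin dB × Fin dC) ℂ} (hM : M.PosDef) :
    (ptA M).PosDef := by
  have e : ptA M = ∑ a : Fin dA, M.submatrix (fun x : Fin dB × Fin dC => (a, x))
      (fun x : Fin dB × Fin dC => (a, x)) := by
    ext x y; simp [ptA_apply, Matrix.sum_apply]
  rw [e]
  refine Matrix.posDef_sum Finset.univ_nonempty fun b _ => hM.submatrix ?_
  intro x y h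
  simpa using h

end Conc

section Young
variable {n : Type*} [Fintype n] [DecidableEq n]

theorem young_scalar {ι : Type*} [Fintype ι] (x c : ι → ℝ) (hx : ∀ i, 0 < x i)
    (hc : ∀ i, 0 ≤ c i) (q0 : ∑ i, c i = 1) (q1 : ∑ i, x i * c i = 1) (w : ℝ) :
    (0 < w → w < 1 → ∑ i, x i ^ w * c i ≤ 1) ∧ (1 < w → 1 ≤ ∑ i, x i ^ w * c i) := by
  have e : ∑ i, (1 + w * (x i - 1)) * c i = 1 := by
    have : ∀ i, (1 + w * (x i - 1)) * c i = (1 - w) * c i + w * (x i * c i) := by intro i; ring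
    simp only [this]
    rw [Finset.sum_add_distrib, ← Finset.mul_sum, ← Finset.mul_sum, q0, q1]
    ring
  refine ⟨fun h0 h1 => ?_, fun h1 => ?_⟩
  · refine le_trans (Finset.sum_le_sum fun i _ => mul_le_mul_of_nonneg_right ?_ (hc i)) e.le
    have := rpow_one_add_le_one_add_mul_self
      (s := x i - 1) (by linarith [hx i]) h0.le h1.le
    rwa [add_sub_cancel] at this
  · refine le_trans e.ge (Finset.sum_le_sum fun i _ => mul_le_mul_of_nonneg_right ?_ (hc i))
    have := one_add_mul_self_le_rpow_one_add (s := x i - 1) (by linarith [hx i]) h1.le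
    rwa [add_sub_cancel] at this

theorem young_aux {A R : Matrix n n ℂ} (hA : A.PosDef) (hR : R.PosDef)
    (hA1 : A.trace.re = 1) (hR1 : R.trace.re = 1) (w : ℝ) :
    (0 < w → w < 1 → (mpow R (1 - w) * mpow A w).trace.re ≤ 1) ∧
    (1 < w → 1 ≤ (mpow R (1 - w) * mpow A w).trace.re) := by
  have q : ∀ p : ℝ, ∑ x : n × n, (hA.1.eigenvalues x.1 / hR.1.eigenvalues x.2) ^ p *
      Complex.normSq (coordM hA hR (mpow R (1/2)) x) = (mpow R (1 - p) * mpow A p).trace.re := by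
    intro p
    have h1 := quad_half hR 1 A p
    rw [Matrix.one_mul, Matrix.conjTranspose_one, Matrix.mul_one, Matrix.mul_one] at h1
    rw [coord_quad, h1]
  have q0 := q 0
  have q1 := q 1
  simp only [Real.rpow_zero, Real.rpow_one, one_mul, sub_zero, sub_self, mpow_one' hR,
    mpow_zero' hR, mpow_one' hA, mpow_zero' hA, Matrix.mul_one, Matrix.one_mul, hA1, hR1] at q0 q1
  have hs := young_scalar (fun x : n × n => hA.1.eigenvalues x.1 / hR.1.eigenvalues x.2)
    (fun x => Complex.normSq (coordM hA hR (mpow R (1/2)) x))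
    (fun x => div_pos (hA.eigenvalues_pos _) (hR.eigenvalues_pos _))
    (fun x => Complex.normSq_nonneg _) q0 q1 w
  rw [← q w]
  exact hs

theorem isUnit_mpow {A : Matrix n n ℂ} (hA : A.PosDef) (t : ℝ) : IsUnit (mpow A t) :=
  (mpow_posDef hA t).isUnit

theorem posDef_ctmul {X : Matrix n n ℂ} (hX : IsUnit X) : (Xᴴ * X).PosDef := by
  have := (Matrix.IsUnit.posDef_star_left_conjugate_iff (x := (1 : Matrix n n ℂ)) hX).2
    Matrix.PosDef.one
  rwa [Matrix.mul_one, Matrix.star_eq_conjTranspose] at this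

theorem posDef_mulct {X : Matrix n n ℂ} (hX : IsUnit X) : (X * Xᴴ).PosDef := by
  have := posDef_ctmul (X := Xᴴ) ((Matrix.isUnit_conjTranspose _).2 hX)
  rwa [Matrix.conjTranspose_conjTranspose] at this

theorem trace_mpow_comm {X : Matrix n n ℂ} (hX : IsUnit X) (a : ℝ) :
    (mpow (Xᴴ * X) a).trace = (mpow (X * Xᴴ) a).trace := by
  obtain ⟨P, hP⟩ : ∃ P, P = X * Xᴴ := ⟨_, rfl⟩
  have hPd : P.PosDef := hP ▸ posDef_mulct hX
  obtain ⟨U, hU⟩ : ∃ U, U = mpow P (-(1/2)) * X := ⟨_, rfl⟩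
  have hUH : Uᴴ = Xᴴ * mpow P (-(1/2)) := by
    rw [hU, Matrix.conjTranspose_mul, mpow_herm hPd]
  have hUU : U * Uᴴ = 1 := by
    calc U * Uᴴ = mpow P (-(1/2)) * ((X * Xᴴ) * mpow P (-(1/2))) := by
          rw [hUH, hU]; simp only [Matrix.mul_assoc]
      _ = mpow P (-(1/2)) * (mpow P 1 * mpow P (-(1/2))) := by rw [← hP, mpow_one' hPd]
      _ = 1 := by
          rw [mpow_add hPd, mpow_add hPd, show (-(1/2) + (1 + -(1/2)) : ℝ) = 0 by norm_num,
            mpow_zero' hPd]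
  have hUU' : Uᴴ * U = 1 := mul_eq_one_comm.mp hUU
  have hX2 : X = mpow P (1/2) * U := by
    rw [hU, ← Matrix.mul_assoc, mpow_cancel hPd, Matrix.one_mul]
  have hXX : Xᴴ * X = Uᴴ * P * U := by
    conv_rhs => rw [← mpow_sq hPd]
    rw [hX2, Matrix.conjTranspose_mul, mpow_herm hPd]; simp only [Matrix.mul_assoc]
  let u : unitary (Matrix n n ℂ) := ⟨Uᴴ, by
    rw [Unitary.mem_iff, Matrix.star_eq_conjTranspose, Matrix.conjTranspose_conjTranspose]
    exact ⟨hUU, hUU'⟩⟩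
  let φ : Matrix n n ℂ →⋆ₐ[ℂ] Matrix n n ℂ := (Unitary.conjStarAlgAut ℂ (Matrix n n ℂ) u : _)
  have hφ : ∀ Z, φ Z = Uᴴ * Z * U := by
    intro Z
    change Unitary.conjStarAlgAut ℂ (Matrix n n ℂ) u Z = _
    rw [Unitary.conjStarAlgAut_apply]
    change Uᴴ * Z * star Uᴴ = _
    rw [Matrix.star_eq_conjTranspose, Matrix.conjTranspose_conjTranspose]
  have h := map_mpow φ hPd (map_posDef φ hPd) a
  rw [hφ, hφ, ← hXX] at h
  rw [← h, ← hP, Matrix.trace_mul_comm, ← Matrix.mul_assoc, hUU, Matrix.one_mul]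

end Young

section Main
variable {dA dB dC : ℕ}
  {ρ : Matrix (Fin dA × Fin dB × Fin dC) (Fin dA × Fin dB × Fin dC) ℂ}

theorem nonempty_of_trace (hρ1 : ρ.trace = 1) :
    Nonempty (Fin dA) ∧ Nonempty (Fin dB) ∧ Nonempty (Fin dC) := by
  have : Nonempty (Fin dA × Fin dB × Fin dC) := by
    by_contra h
    rw [not_nonempty_iff] at h
    rw [Matrix.trace, Finset.univ_eq_empty, Finset.sum_empty] at hρ1
    exact zero_ne_one hρ1
  obtain ⟨a, b, c⟩ := this
  exact ⟨⟨a⟩, ⟨b⟩, ⟨c⟩⟩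

theorem red_posDef (hρ : ρ.PosDef) (hρ1 : ρ.trace = 1) :
    (redAC ρ).PosDef ∧ (redBC ρ).PosDef ∧ (redC ρ).PosDef := by
  obtain ⟨_, _, _⟩ := nonempty_of_trace hρ1
  have h2 : (redBC ρ).PosDef := map_posDef (homBC dA dB dC) (ptA_posDef hρ)
  refine ⟨map_posDef (homAC dA dB dC) (ptB_posDef hρ), h2, ?_⟩
  rw [← homAC_ptB_redBC]
  exact map_posDef (homAC dA dB dC) (ptB_posDef h2)

theorem markov_powers (hρ : ρ.PosDef) (hρ1 : ρ.trace = 1) (h : IsShortMarkov ρ) (w : ℝ) :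
    mpow ρ w = mpow (redAC ρ) w * mpow (redC ρ) (-w) * mpow (redBC ρ) w := by
  obtain ⟨_, _, _⟩ := nonempty_of_trace hρ1
  obtain ⟨ha, hb, hc⟩ := red_posDef hρ hρ1
  have := fwd_main (homBC dA dB dC) ha hρ (ptA_posDef ha) (ptA_posDef hρ) (trA ρ) (trA (redAC ρ))
    (by rw [homBC_ptA_redAC, homBC_ptA]; exact h) w
  rwa [homBC_ptA_redAC, homBC_ptA] at this

theorem markov_of_trace (hρ : ρ.PosDef) (hρ1 : ρ.trace = 1) (t : ℝ)
    (hQ : (0 < 2 * t ∧ 2 * t < 1 ∧ 1 ≤ (mpow ρ (1 - 2 * t) * (mpow (redAC ρ) t * mpow (redC ρ) (-t)) *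
        mpow (redBC ρ) (2 * t) * (mpow (redC ρ) (-t) * mpow (redAC ρ) t)).trace.re) ∨
      (-1 < 2 * t ∧ 2 * t < 0 ∧ (mpow ρ (1 - 2 * t) * (mpow (redAC ρ) t * mpow (redC ρ) (-t)) *
        mpow (redBC ρ) (2 * t) * (mpow (redC ρ) (-t) * mpow (redAC ρ) t)).trace.re ≤ 1)) :
    IsShortMarkov ρ := by
  obtain ⟨_, _, _⟩ := nonempty_of_trace hρ1
  obtain ⟨ha, hb, hc⟩ := red_posDef hρ hρ1
  have h := conv_main (homAC dA dB dC) hb hρ (ptB_posDef hb) (ptB_posDef hρ) (trB ρ)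
    (trB (redBC ρ)) hρ1 t (by
      rw [map_mul, map_mul, map_mpow _ (ptB_posDef hb) (map_posDef _ (ptB_posDef hb)),
        map_mpow _ (ptB_posDef hρ) (map_posDef _ (ptB_posDef hρ)), homAC_ptB_redBC, homAC_ptB]
      exact hQ) (1/2)
  rw [homAC_ptB_redBC, homAC_ptB] at h
  have h' := congrArg Matrix.conjTranspose h
  simp only [Matrix.conjTranspose_mul, mpow_herm hρ, mpow_herm ha, mpow_herm hb,
    mpow_herm hc] at h'
  unfold IsShortMarkov
  calc ρ = mpow ρ (1/2) * mpow ρ (1/2) := (mpow_sq hρ).symm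
    _ = (mpow (redAC ρ) (1/2) * (mpow (redC ρ) (-(1/2)) * mpow (redBC ρ) (1/2))) *
          (mpow (redBC ρ) (1/2) * mpow (redC ρ) (-(1/2)) * mpow (redAC ρ) (1/2)) := by
        rw [← h', ← h]
    _ = mpow (redAC ρ) (1/2) * mpow (redC ρ) (-(1/2)) *
          (mpow (redBC ρ) (1/2) * mpow (redBC ρ) (1/2)) * mpow (redC ρ) (-(1/2)) *
          mpow (redAC ρ) (1/2) := by simp only [Matrix.mul_assoc]
    _ = _ := by rw [mpow_sq hb]

/-- the vector whose square is the Rényi trace functional -/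
theorem vec_isUnit (hρ : ρ.PosDef) (hρ1 : ρ.trace = 1) (s t : ℝ) :
    IsUnit (mpow ρ s * mpow (redAC ρ) t * mpow (redC ρ) (-t) * mpow (redBC ρ) t) := by
  obtain ⟨ha, hb, hc⟩ := red_posDef hρ hρ1
  exact (((isUnit_mpow hρ s).mul (isUnit_mpow ha t)).mul (isUnit_mpow hc (-t))).mul
    (isUnit_mpow hb t)

theorem vec_sq (hρ : ρ.PosDef) (hρ1 : ρ.trace = 1) (s t r : ℝ) :
    ((mpow ρ s * mpow (redAC ρ) t * mpow (redC ρ) (-t) * mpow (redBC ρ) t) *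
      (mpow ρ s * mpow (redAC ρ) t * mpow (redC ρ) (-t) * mpow (redBC ρ) t)ᴴ * mpow ρ r).trace =
    (mpow ρ (2 * s + r) * (mpow (redAC ρ) t * mpow (redC ρ) (-t)) *
        mpow (redBC ρ) (2 * t) * (mpow (redC ρ) (-t) * mpow (redAC ρ) t)).trace := by
  obtain ⟨ha, hb, hc⟩ := red_posDef hρ hρ1
  rw [show 2 * t = t + t by ring, ← mpow_add hb, show 2 * s + r = s + (r + s) by ring,
    ← mpow_add hρ, ← mpow_add hρ]
  simp only [Matrix.conjTranspose_mul, mpow_herm hρ, mpow_herm ha, mpow_herm hb, mpow_herm hc]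
  calc _ = ((mpow ρ s * mpow (redAC ρ) t * mpow (redC ρ) (-t) * mpow (redBC ρ) t *
      (mpow (redBC ρ) t * (mpow (redC ρ) (-t) * mpow (redAC ρ) t))) * (mpow ρ s * mpow ρ r)).trace
        := by simp only [Matrix.mul_assoc]
    _ = _ := by
      rw [Matrix.trace_mul_comm, mpow_add hρ, mpow_add hρ, mpow_add hρ]
      simp only [Matrix.mul_assoc, mpow_add_assoc hρ]
      congr 3
      ring

theorem conv_renyi (hρ : ρ.PosDef) (hρ1 : ρ.trace = 1) (α : ℝ)
    (hα : α ∈ Set.Ioo (0:ℝ) 1 ∪ Set.Ioo (1:ℝ) 2) (h : IRenyi α ρ = 0) : IsShortMarkov ρ := by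
  obtain ⟨_, _, _⟩ := nonempty_of_trace hρ1
  have hα1 : α - 1 ≠ 0 := by
    rcases hα with h | h
    · linarith [h.2]
    · have := h.1; intro h; linarith
  obtain ⟨t, ht⟩ : ∃ t, t = (1 - α)/2 := ⟨_, rfl⟩
  unfold IRenyi at h
  rw [mul_eq_zero, or_iff_right (inv_ne_zero hα1), show (α - 1)/2 = -t by rw [ht]; ring,
    show 1 - α = 2 * t by rw [ht]; ring, show 2 * t / 2 = t by ring,
    show α = 2 * ((1 - 2 * t) / 2) + 0 by rw [ht]; ring] at h
  have v := vec_sq hρ hρ1 ((1 - 2 * t) / 2) t 0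
  rw [mpow_zero' hρ, Matrix.mul_one] at v
  simp only [Matrix.mul_assoc] at v h
  rw [← v] at h
  have hp := (posDef_mulct (vec_isUnit hρ hρ1 ((1 - 2 * t) / 2) t)).trace_pos
  simp only [Matrix.mul_assoc] at hp
  have h1 := Real.eq_one_of_pos_of_log_eq_zero (Complex.pos_iff.1 hp).1 h
  rw [v, show 2 * ((1 - 2 * t) / 2) + 0 = 1 - 2 * t by ring] at h1
  apply markov_of_trace hρ hρ1 t
  simp only [Matrix.mul_assoc]
  rw [h1]
  rcases hα with h | h
  · left; exact ⟨by linarith [h.2], by linarith [h.1], le_refl _⟩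
  · right; exact ⟨by linarith [h.2], by linarith [h.1], le_refl _⟩

theorem conv_tilde (hρ : ρ.PosDef) (hρ1 : ρ.trace = 1) (α : ℝ)
    (hα : α ∈ Set.Ioo (1/2:ℝ) 1 ∪ Set.Ioi (1:ℝ)) (h : ITilde α ρ = 0) : IsShortMarkov ρ := by
  obtain ⟨_, _, _⟩ := nonempty_of_trace hρ1
  have hα0 : 0 < α := by
    rcases hα with h | h
    · linarith [h.1]
    · exact one_pos.trans h
  have hα1 : α - 1 ≠ 0 := by
    rcases hα with h | h
    · linarith [h.2]
    · have : 1 < α := h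
      intro h; linarith
  obtain ⟨t, ht⟩ : ∃ t, t = (1 - α)/(2 * α) := ⟨_, rfl⟩
  have ht2 : 2 * t = 1 / α - 1 := by rw [ht]; field_simp
  unfold ITilde at h
  rw [mul_eq_zero, or_iff_right (div_ne_zero (by positivity) hα1), show (α - 1)/(2 * α) = -t by rw [ht]; ring,
    ← ht] at h
  have hu := vec_isUnit hρ hρ1 (1/2) t
  have v := vec_sq hρ hρ1 (1/2) t (1 - 1 / α)
  rw [show 2 * (1/2) + (1 - 1/α) = 1 - 2 * t by rw [ht2]; ring] at v
  generalize mpow ρ (1/2) * mpow (redAC ρ) t * mpow (redC ρ) (-t) * mpow (redBC ρ) t = X at *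
  have hpd := posDef_ctmul hu
  have hPd := posDef_mulct hu
  unfold mnorm at h
  rw [show 2 * α / 2 = α by ring] at h
  have hp := (Complex.pos_iff.1 (mpow_posDef hpd α).trace_pos).1
  rw [Real.log_rpow hp, mul_eq_zero, or_iff_right (inv_ne_zero (by positivity))] at h
  have h1 := Real.eq_one_of_pos_of_log_eq_zero hp h
  rw [trace_mpow_comm hu] at h1
  have hy := young_aux (mpow_posDef hPd α) hρ h1 (by rw [hρ1]; rfl) (1 / α)
  rw [mpow_mul hPd, mul_one_div_cancel hα0.ne', mpow_one' hPd, Matrix.trace_mul_comm, v] at hy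
  apply markov_of_trace hρ hρ1 t
  rcases hα with h | h
  · left
    have h3 : 1 < 1 / α := by rw [lt_div_iff₀ hα0]; linarith [h.2]
    have h4 : 1 / α < 2 := by rw [div_lt_iff₀ hα0]; linarith [h.1]
    exact ⟨by linarith, by linarith, hy.2 h3⟩
  · right
    have h' : 1 < α := h
    have h3 : 1 / α < 1 := by rw [div_lt_iff₀ hα0]; linarith
    have h4 : 0 < 1 / α := by positivity
    exact ⟨by linarith, by linarith, hy.1 h4 h3⟩

theorem fwd_both (hρ : ρ.PosDef) (hρ1 : ρ.trace = 1) (hM : IsShortMarkov ρ) (α : ℝ)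
    (hα0 : 0 < α) : IRenyi α ρ = 0 ∧ ITilde α ρ = 0 := by
  obtain ⟨ha, hb, hc⟩ := red_posDef hρ hρ1
  have k := markov_powers hρ hρ1 hM
  constructor
  · have v := vec_sq hρ hρ1 (α / 2) ((1 - α) / 2) 0
    rw [mpow_zero' hρ, Matrix.mul_one, show 2 * (α / 2) + 0 = α by ring,
      show 2 * ((1 - α) / 2) = 1 - α by ring, show -((1 - α) / 2) = (α - 1) / 2 by ring] at v
    have e : mpow ρ (α / 2) * mpow (redAC ρ) ((1 - α) / 2) * mpow (redC ρ) ((α - 1) / 2) *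
        mpow (redBC ρ) ((1 - α) / 2) = mpow ρ (1/2) := by
      have := k ((1 - α) / 2)
      rw [show -((1 - α) / 2) = (α - 1) / 2 by ring] at this
      rw [Matrix.mul_assoc, Matrix.mul_assoc, ← Matrix.mul_assoc (mpow (redAC ρ) _), ← this,
        mpow_add hρ]
      congr 1; ring
    rw [e, mpow_herm hρ, mpow_sq hρ, hρ1] at v
    unfold IRenyi
    simp only [Matrix.mul_assoc] at v ⊢
    rw [← v]
    simp
  · have e : mpow ρ (1/2) * mpow (redAC ρ) ((1 - α) / (2 * α)) *
        mpow (redC ρ) ((α - 1) / (2 * α)) *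
        mpow (redBC ρ) ((1 - α) / (2 * α)) = mpow ρ (1/(2 * α)) := by
      have := k ((1 - α) / (2 * α))
      rw [show -((1 - α) / (2 * α)) = (α - 1) / (2 * α) by ring] at this
      rw [Matrix.mul_assoc, Matrix.mul_assoc, ← Matrix.mul_assoc (mpow (redAC ρ) _), ← this,
        mpow_add hρ]
      congr 1; field_simp; ring
    unfold ITilde mnorm
    rw [e, mpow_herm hρ, mpow_add hρ, mpow_mul hρ,
      show (1/(2 * α) + 1/(2 * α)) * (2 * α / 2) = 1 by field_simp; norm_num, mpow_one' hρ, hρ1]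
    simp

end Main

theorem stmt_16 {dA dB dC : ℕ}
    (ρ : Matrix (Fin dA × Fin dB × Fin dC) (Fin dA × Fin dB × Fin dC) ℂ)
    (hρ : ρ.PosDef) (hρ1 : ρ.trace = 1) :
    (IsShortMarkov ρ →
      ∀ α : ℝ, α ∈ Set.Ioo (0:ℝ) 1 ∪ Set.Ioi (1:ℝ) →
        IRenyi α ρ = 0 ∧ ITilde α ρ = 0) ∧
    (∀ α : ℝ, α ∈ Set.Ioo (0:ℝ) 1 ∪ Set.Ioo (1:ℝ) 2 →
        IRenyi α ρ = 0 → IsShortMarkov ρ) ∧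
    (∀ α : ℝ, α ∈ Set.Ioo (1/2 : ℝ) 1 ∪ Set.Ioi (1:ℝ) →
        ITilde α ρ = 0 → IsShortMarkov ρ) := by
  refine ⟨fun hM α hα => fwd_both hρ hρ1 hM α ?_, conv_renyi hρ hρ1, conv_tilde hρ hρ1⟩
  rcases hα with h | h
  · exact h.1
  · exact one_pos.trans h
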